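/- Let T = k* act on B = k[x_{-n}, x_{-n+1}, ..., x_0, ..., x_n] with t·x_i = t^i x_i. Then the cardinality of a minimal generating set for B^T is O(n · e^{12√n · log(2n)}). -/

import Mathlib

open MvPolynomial

variable (k : Type) [Field k]

/-- The action of `t ∈ k* = 𝔾ₘ` on a polynomial ring in which the variable `x_i` has
weight `w i`: the substitution `x_i ↦ t^{w i} x_i`. -/
noncomputable def torusAct {ι : Type} (w : ι → ℤ) (t : kˣ) :
    MvPolynomial ι k →ₐ[k] MvPolynomial ι k :=
  aeval (fun i => ((t ^ w i : kˣ) : k) • X i)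

/-- The ring of invariants of the torus `k*` acting on a polynomial ring with the
variable `x_i` of weight `w i`. -/
noncomputable def torusInv {ι : Type} (w : ι → ℤ) : Subalgebra k (MvPolynomial ι k) where
  carrier := {p | ∀ t : kˣ, torusAct k w t p = p}
  mul_mem' := by intro a b ha hb t; rw [map_mul, ha t, hb t]
  add_mem' := by intro a b ha hb t; rw [map_add, ha t, hb t]
  algebraMap_mem' := by intro r t; exact (torusAct k w t).commutes r

/-- The minimal cardinality of a (finite) generating set of a subalgebra. -/
noncomputable def minGens {R : Type} [CommRing R] [Algebra k R] (A : Subalgebra k R) : ℕ :=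
  sInf {c : ℕ | ∃ S : Finset R, S.card = c ∧ Algebra.adjoin k (S : Set R) = A}

/-- The weight function for the variables `x_1, …, x_n, x_{-n}`: the variable `x_i`
(encoded `some i`) has weight `i + 1 ∈ {1, …, n}`, and `x_{-n}` (encoded `none`) has
weight `-n`. -/
def wOpt (n : ℕ) : Option (Fin n) → ℤ :=
  fun o => Option.elim o (-(n : ℤ)) (fun i => (i : ℤ) + 1)

/-- The weight function for the variables `x_{-n}, x_{-n+1}, …, x_0, …, x_n`:
the `i`-th variable (for `i : Fin (2n+1)`) has weight `i - n`. -/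
def wSym (n : ℕ) : Fin (2 * n + 1) → ℤ := fun i => (i : ℤ) - n


namespace TorusComb

noncomputable section

/-- geometric weight centred at `z`. -/
def wt (N : ℕ) (z y : ℤ) : ℝ := ((N : ℝ) / (N + 1)) ^ (y - z).natAbs

def Mz (N : ℕ) (B : Finset ℤ) (z : ℤ) : ℝ := ∑ y ∈ B, wt N z y

lemma ratio_nonneg (N : ℕ) : (0:ℝ) ≤ (N : ℝ) / (N + 1) := by positivity

lemma ratio_le_one (N : ℕ) : (N : ℝ) / (N + 1) ≤ 1 := by
  rw [div_le_one (by positivity)]; linarith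

lemma ratio_pow (N : ℕ) : (1:ℝ) ≤ 3 * ((N : ℝ) / (N + 1)) ^ N := by
  rcases Nat.eq_zero_or_pos N with h | h
  · subst h; norm_num
  have hN : (0:ℝ) < N := by exact_mod_cast h
  have h1 : ((N + 1 : ℝ) / N) ^ N ≤ 3 := by
    have h2 : ((N + 1 : ℝ) / N) ≤ Real.exp (1 / N) := by
      have := Real.add_one_le_exp (1 / (N:ℝ))
      have h3 : ((N + 1 : ℝ) / N) = 1 / N + 1 := by field_simp; ring
      rw [h3]; exact this
    calc ((N + 1 : ℝ) / N) ^ N ≤ (Real.exp (1 / N)) ^ N := by gcongr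
      _ = Real.exp 1 := by
        rw [← Real.exp_nat_mul]; congr 1; field_simp
      _ ≤ 3 := by linarith [Real.exp_one_lt_d9]
  have h4 : ((N : ℝ) / (N + 1)) ^ N * ((N + 1 : ℝ) / N) ^ N = 1 := by
    rw [← mul_pow]
    have : ((N : ℝ) / (N + 1)) * ((N + 1 : ℝ) / N) = 1 := by field_simp
    rw [this, one_pow]
  have h5 : 0 ≤ ((N : ℝ) / (N + 1)) ^ N := by positivity
  nlinarith

lemma wt_nonneg (N : ℕ) (z y : ℤ) : 0 ≤ wt N z y := pow_nonneg (ratio_nonneg N) _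

lemma wt_shift (N : ℕ) (z y x : ℤ) (hx : x.natAbs ≤ N) : wt N z y ≤ 3 * wt N z (y + x) := by
  unfold wt
  have h1 : ((N : ℝ) / (N + 1)) ^ ((y - z).natAbs + N) ≤ ((N : ℝ) / (N + 1)) ^ (y + x - z).natAbs :=
    pow_le_pow_of_le_one (ratio_nonneg N) (ratio_le_one N) (by omega)
  rw [pow_add] at h1
  have h2 := ratio_pow N
  have h3 : 0 ≤ ((N : ℝ) / (N + 1)) ^ ((y - z).natAbs) := pow_nonneg (ratio_nonneg N) _
  nlinarith

lemma Mz_exists_max (N : ℕ) (B : Finset ℤ) : ∃ z, ∀ z', Mz N B z' ≤ Mz N B z := by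
  rcases B.eq_empty_or_nonempty with h | h
  · subst h; exact ⟨0, fun z' => by simp [Mz]⟩
  set lo := B.min' h
  set hi := B.max' h
  have hlh : lo ≤ hi := B.min'_le_max' h
  obtain ⟨z, hz, hmax⟩ := Finset.exists_max_image (Finset.Icc lo hi) (Mz N B) ⟨lo, by simp [hlh]⟩
  refine ⟨z, fun z' => ?_⟩
  rcases lt_or_ge z' lo with h1 | h1
  · refine le_trans ?_ (hmax lo (by simp [hlh]))
    apply Finset.sum_le_sum
    intro y hy
    have := B.min'_le y hy
    exact pow_le_pow_of_le_one (ratio_nonneg N) (ratio_le_one N) (by omega)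
  rcases lt_or_ge hi z' with h2 | h2
  · refine le_trans ?_ (hmax hi (by simp [hlh]))
    apply Finset.sum_le_sum
    intro y hy
    have := B.le_max' y hy
    exact pow_le_pow_of_le_one (ratio_nonneg N) (ratio_le_one N) (by omega)
  exact hmax z' (by simp [h1, h2])

def zc (N : ℕ) (B : Finset ℤ) : ℤ := Classical.choose (Mz_exists_max N B)

def Mm (N : ℕ) (B : Finset ℤ) : ℝ := Mz N B (zc N B)

lemma Mz_le_Mm (N : ℕ) (B : Finset ℤ) (z : ℤ) : Mz N B z ≤ Mm N B :=
  Classical.choose_spec (Mz_exists_max N B) z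

def lam (N : ℕ) (B : Finset ℤ) (x : ℤ) : ℝ := ∑ y ∈ B with y + x ∉ B, wt N (zc N B) y

lemma lam_nonneg (N : ℕ) (B : Finset ℤ) (x : ℤ) : 0 ≤ lam N B x :=
  Finset.sum_nonneg fun _ _ => wt_nonneg _ _ _

lemma lam_zero (N : ℕ) (B : Finset ℤ) : lam N B 0 = 0 := by
  unfold lam
  apply Finset.sum_eq_zero
  intro y hy
  simp at hy

lemma lam_add (N : ℕ) (B : Finset ℤ) (x x' : ℤ) (hx : x.natAbs ≤ N) :
    lam N B (x + x') ≤ lam N B x + 3 * lam N B x' := by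
  unfold lam
  set z := zc N B
  have h1 : ∑ y ∈ B with y + (x + x') ∉ B, wt N z y ≤
      ∑ y ∈ B with y + x ∉ B, wt N z y + ∑ y ∈ B with (y + x ∈ B ∧ y + (x + x') ∉ B), wt N z y := by
    rw [← Finset.sum_union]
    · apply Finset.sum_le_sum_of_subset_of_nonneg
      · intro y hy
        simp at hy ⊢
        tauto
      · intro _ _ _; exact wt_nonneg _ _ _
    · rw [Finset.disjoint_left]; intro y hy; simp at hy ⊢; tauto
  have h2 : ∑ y ∈ B with (y + x ∈ B ∧ y + (x + x') ∉ B), wt N z y ≤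
      3 * ∑ y ∈ B with y + x' ∉ B, wt N z y := by
    rw [Finset.mul_sum]
    calc ∑ y ∈ B with (y + x ∈ B ∧ y + (x + x') ∉ B), wt N z y
        ≤ ∑ y ∈ B with (y + x ∈ B ∧ y + (x + x') ∉ B), 3 * wt N z (y + x) :=
          Finset.sum_le_sum fun y _ => wt_shift N z y x hx
      _ = ∑ y ∈ (B.filter (fun y => y + x ∈ B ∧ y + (x + x') ∉ B)).image (· + x), 3 * wt N z y := by
          rw [Finset.sum_image]
          intro a _ b _ h; simpa using h
      _ ≤ _ := by
          apply Finset.sum_le_sum_of_subset_of_nonneg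
          · intro y hy
            simp at hy ⊢
            obtain ⟨h1, h2⟩ := hy
            exact h2
          · intro _ _ _; have := wt_nonneg N z; exact mul_nonneg (by norm_num) (this _)
  linarith

lemma lam_neg (N : ℕ) (B : Finset ℤ) (x : ℤ) (hx : x.natAbs ≤ N) :
    lam N B (-x) ≤ 3 * lam N B x := by
  unfold lam
  set z := zc N B with hz
  have h0 : ∑ y ∈ B, wt N z (y - x) ≤ ∑ y ∈ B, wt N z y := by
    have : Mz N B (z + x) ≤ Mz N B z := Mz_le_Mm N B (z + x)
    unfold Mz at this
    refine le_trans (le_of_eq ?_) this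
    apply Finset.sum_congr rfl
    intro y _
    unfold wt; congr 2; ring
  rw [← Finset.sum_filter_add_sum_filter_not B (fun y => y - x ∉ B),
      ← Finset.sum_filter_add_sum_filter_not B (fun y => y + x ∉ B) (fun y => wt N z y)] at h0
  have h1 : ∑ y ∈ B with ¬ (y - x ∉ B), wt N z (y - x) = ∑ y ∈ B with ¬ (y + x ∉ B), wt N z y := by
    apply Finset.sum_bij (fun y _ => y - x)
    · intro a ha; simp at ha ⊢; tauto
    · intro a _ b _ h; simpa using h
    · intro b hb; simp at hb; exact ⟨b + x, by simp; tauto, by ring⟩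
    · intro a _; rfl
  have h2 : ∑ y ∈ B with y + -x ∉ B, wt N z y ≤ 3 * ∑ y ∈ B with y - x ∉ B, wt N z (y - x) := by
    rw [Finset.mul_sum]
    simp only [← sub_eq_add_neg]
    apply Finset.sum_le_sum
    intro y _
    have := wt_shift N z y (-x) (by simpa using hx)
    simpa [sub_eq_add_neg] using this
  linarith

lemma Mm_union (N : ℕ) (B : Finset ℤ) (a : ℤ) (ha : a.natAbs ≤ N) :
    Mm N B + lam N B a / 3 ≤ Mm N (B ∪ B.image (· + a)) := by
  refine le_trans ?_ (Mz_le_Mm N _ (zc N B))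
  unfold Mm Mz lam
  set z := zc N B
  have hd : Disjoint B ((B.filter (fun y => y + a ∉ B)).image (· + a)) := by
    rw [Finset.disjoint_left]; intro y hy hy2
    simp at hy2; exact hy2.2 hy
  have h1 : ∑ y ∈ B, wt N z y + ∑ y ∈ (B.filter (fun y => y + a ∉ B)).image (· + a), wt N z y
      ≤ ∑ y ∈ B ∪ B.image (· + a), wt N z y := by
    rw [← Finset.sum_union hd]
    apply Finset.sum_le_sum_of_subset_of_nonneg
    · apply Finset.union_subset_union_right
      apply Finset.image_subset_image
      apply Finset.filter_subset
    · intro _ _ _; exact wt_nonneg _ _ _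
  rw [Finset.sum_image (by intro a _ b _ h; simpa using h)] at h1
  have h2 : ∑ y ∈ B with y + a ∉ B, wt N z y ≤ 3 * ∑ y ∈ B with y + a ∉ B, wt N z (y + a) := by
    rw [Finset.mul_sum]
    exact Finset.sum_le_sum fun y _ => wt_shift N z y a ha
  linarith

lemma one_le_Mm (N : ℕ) (B : Finset ℤ) (hB : B.Nonempty) : 1 ≤ Mm N B := by
  obtain ⟨b, hb⟩ := hB
  refine le_trans ?_ (Mz_le_Mm N B b)
  unfold Mz
  refine le_trans ?_ (Finset.single_le_sum (fun y _ => wt_nonneg N b y) hb)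
  simp [wt]

lemma geom_le (N : ℕ) (S : Finset ℕ) : ∑ i ∈ S, ((N : ℝ) / (N + 1)) ^ i ≤ N + 1 := by
  have hlt : (N : ℝ) / (N + 1) < 1 := by rw [div_lt_one (by positivity)]; linarith
  have h := summable_geometric_of_lt_one (ratio_nonneg N) hlt
  have h2 := h.sum_le_tsum S (fun i _ => pow_nonneg (ratio_nonneg N) i)
  rw [tsum_geometric_of_lt_one (ratio_nonneg N) hlt] at h2
  refine h2.trans (le_of_eq ?_)
  field_simp
  ring

lemma Mm_le (N : ℕ) (B : Finset ℤ) : Mm N B ≤ 2 * (N + 1) := by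
  unfold Mm Mz
  set z := zc N B
  rw [← Finset.sum_filter_add_sum_filter_not B (fun y => z ≤ y)]
  have aux : ∀ S : Finset ℤ, Set.InjOn (fun y : ℤ => (y - z).natAbs) S →
      ∑ y ∈ S, wt N z y ≤ N + 1 := by
    intro S hS
    have : ∑ y ∈ S, wt N z y = ∑ i ∈ S.image (fun y : ℤ => (y - z).natAbs), ((N : ℝ) / (N + 1)) ^ i := by
      rw [Finset.sum_image hS]; rfl
    rw [this]; exact geom_le N _
  have h1 := aux (B.filter (fun y => z ≤ y)) (by
    intro a ha b hb h; simp at ha hb h; omega)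
  have h2 := aux (B.filter (fun y => ¬ z ≤ y)) (by
    intro a ha b hb h; simp at ha hb h; omega)
  linarith

lemma card_window (N : ℕ) (B : Finset ℤ) (S : Finset ℤ) (y : ℤ) (hS : S ⊆ B)
    (hw : ∀ s ∈ S, (s - y).natAbs ≤ N) : (S.card : ℝ) ≤ 3 * Mm N B := by
  have h1 : Mz N S y ≤ Mm N B := by
    refine le_trans ?_ (Mz_le_Mm N B y)
    exact Finset.sum_le_sum_of_subset_of_nonneg hS (fun _ _ _ => wt_nonneg _ _ _)
  have h2 : (S.card : ℝ) * ((N : ℝ) / (N + 1)) ^ N ≤ Mz N S y := by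
    unfold Mz
    rw [← nsmul_eq_mul]
    apply Finset.card_nsmul_le_sum
    intro s hs
    exact pow_le_pow_of_le_one (ratio_nonneg N) (ratio_le_one N) (hw s hs)
  have h3 := ratio_pow N
  have h4 : (0:ℝ) ≤ S.card := by positivity
  nlinarith

lemma average (N : ℕ) (B : Finset ℤ) (hB : B.Nonempty) (Y : Finset ℤ) (L : ℝ)
    (hL : ∀ x ∈ Y, lam N B x ≤ L) :
    ∃ y ∈ B, (Y.card : ℝ) * (Mm N B - L) ≤ ((Y.filter (fun x => y + x ∈ B)).card : ℝ) * Mm N B := by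
  by_contra hcon
  push Not at hcon
  set z := zc N B with hz
  have hM : 1 ≤ Mm N B := one_le_Mm N B hB
  have key : ∑ x ∈ Y, (Mm N B - lam N B x) =
      ∑ y ∈ B, wt N z y * ((Y.filter (fun x => y + x ∈ B)).card : ℝ) := by
    have h1 : ∀ x ∈ Y, Mm N B - lam N B x = ∑ y ∈ B, if y + x ∈ B then wt N z y else 0 := by
      intro x _
      unfold Mm Mz lam
      rw [← Finset.sum_filter_add_sum_filter_not B (fun y => y + x ∉ B), ← hz, Finset.sum_filter (fun y => ¬ (y + x ∉ B))]
      simp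
    rw [Finset.sum_congr rfl h1, Finset.sum_comm]
    apply Finset.sum_congr rfl
    intro y _
    rw [← Finset.sum_filter, Finset.sum_const, nsmul_eq_mul, mul_comm]
  have h2 : (Y.card : ℝ) * (Mm N B - L) ≤ ∑ x ∈ Y, (Mm N B - lam N B x) := by
    rw [← nsmul_eq_mul]
    apply Finset.card_nsmul_le_sum
    intro x hx; linarith [hL x hx]
  have h3 : (∑ y ∈ B, wt N z y * ((Y.filter (fun x => y + x ∈ B)).card : ℝ)) * Mm N B ≤
      ∑ y ∈ B, wt N z y * ((Y.card : ℝ) * (Mm N B - L)) := by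
    rw [Finset.sum_mul]
    apply Finset.sum_le_sum
    intro y hy
    rw [mul_assoc]
    exact mul_le_mul_of_nonneg_left (hcon y hy).le (wt_nonneg _ _ _)
  have h4 : (∑ y ∈ B, wt N z y * ((Y.filter (fun x => y + x ∈ B)).card : ℝ)) * Mm N B <
      ∑ y ∈ B, wt N z y * ((Y.card : ℝ) * (Mm N B - L)) := by
    have hpos : ∃ y ∈ B, 0 < wt N z y := by
      by_contra hc
      push Not at hc
      have : Mm N B ≤ 0 := Finset.sum_nonpos hc
      linarith
    rw [Finset.sum_mul]
    apply Finset.sum_lt_sum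
    · intro y hy
      rw [mul_assoc]
      exact mul_le_mul_of_nonneg_left (hcon y hy).le (wt_nonneg _ _ _)
    · obtain ⟨y, hy, hyp⟩ := hpos
      exact ⟨y, hy, by rw [mul_assoc]; exact mul_lt_mul_of_pos_left (hcon y hy) hyp⟩
  rw [← Finset.sum_mul, ← key] at h4
  have h5 : ∑ y ∈ B, wt N z y = Mm N B := rfl
  rw [h5] at h4
  nlinarith

end

end TorusComb


namespace TorusComb

section
open scoped Pointwise

lemma ball_growth {G : Type*} [AddCommGroup G] [Fintype G] [DecidableEq G] (C : Finset G)
    (h0 : (0:G) ∈ C) (hneg : ∀ c ∈ C, -c ∈ C) (hgen : AddSubgroup.closure (C : Set G) = ⊤) (i : ℕ) :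
    (3 * i + 1) • C = Finset.univ ∨ (i + 1) * C.card ≤ ((3 * i + 1) • C).card := by
  induction i with
  | zero => right; simp
  | succ i ih =>
    have hmono : ∀ j, j • C ⊆ (j + 1) • C := by
      intro j
      rw [succ_nsmul]
      exact Finset.subset_add_left _ h0
    have e1 : (3 * (i + 1) + 1) • C = ((3 * i + 1) + 1 + 1 + 1) • C := by congr 1
    rw [e1]
    rcases ih with ih | ih
    · left
      have := ((hmono (3*i+1)).trans (hmono (3*i+1+1))).trans (hmono (3*i+1+1+1))
      rw [ih] at this
      exact Finset.eq_univ_iff_forall.mpr (fun x => this (Finset.mem_univ x))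
    by_cases hc : (3 * i + 1 + 1 + 1) • C ⊆ (3 * i + 1 + 1) • C
    · left
      have hall : ∀ x : G, x ∈ (3 * i + 1 + 1) • C := by
        intro x
        have hx : x ∈ AddSubgroup.closure (C : Set G) := by rw [hgen]; trivial
        induction hx using AddSubgroup.closure_induction_right with
        | zero => 
          have : ∀ j, (0:G) ∈ (j+1) • C := by
            intro j
            induction j with
            | zero => simpa using h0
            | succ j ihj => exact hmono _ ihj
          exact this _
        | add_right x _ y hy hx =>
          apply hc
          rw [succ_nsmul]
          exact Finset.add_mem_add hx hy
        | add_neg_cancel x _ y hy hx =>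
          apply hc
          rw [succ_nsmul]
          exact Finset.add_mem_add hx (hneg y hy)
      exact Finset.eq_univ_iff_forall.mpr (fun x => hmono _ (hmono _ (hall x)))
    · right
      rw [Finset.not_subset] at hc
      obtain ⟨g, hg1, hg2⟩ := hc
      have hd : Disjoint ((3 * i + 1) • C) (C.image (fun c => g + c)) := by
        rw [Finset.disjoint_left]
        intro b hb hb2
        rw [Finset.mem_image] at hb2
        obtain ⟨c, hc, rfl⟩ := hb2
        apply hg2
        rw [succ_nsmul]
        have := Finset.add_mem_add hb (hneg c hc)
        simpa using this
      have hsub : (3 * i + 1) • C ∪ C.image (fun c => g + c) ⊆ (3 * i + 1 + 1 + 1 + 1) • C := by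
        apply Finset.union_subset
        · exact ((hmono (3*i+1)).trans (hmono (3*i+1+1))).trans (hmono (3*i+1+1+1))
        · intro b hb
          rw [Finset.mem_image] at hb
          obtain ⟨c, hc, rfl⟩ := hb
          rw [succ_nsmul]
          exact Finset.add_mem_add hg1 hc
      have := Finset.card_le_card hsub
      rw [Finset.card_union_of_disjoint hd, Finset.card_image_of_injective _ (add_right_injective g)] at this
      linarith

lemma closure_top (a0 : ℕ) (ha0 : 1 ≤ a0) (Λ : Finset ℕ) (hmem : a0 ∈ Λ)
    (hg : ∀ g : ℕ, 2 ≤ g → ∃ s ∈ Λ, ¬ g ∣ s) (H : AddSubgroup (ZMod a0))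
    (hH : ∀ s ∈ Λ, (s : ZMod a0) ∈ H) : H = ⊤ := by
  set H' : AddSubgroup ℤ := H.comap (Int.castAddHom (ZMod a0)) with hH'
  have hs : ∀ s ∈ Λ, (s : ℤ) ∈ H' := by
    intro s hs
    rw [hH', AddSubgroup.mem_comap]
    simpa using hH s hs
  obtain ⟨g, hgen⟩ := Int.subgroup_cyclic H'
  have hdvd : ∀ s ∈ Λ, g.natAbs ∣ s := by
    intro s h
    have := hs s h
    rw [hgen, AddSubgroup.mem_closure_singleton] at this
    obtain ⟨c, hc⟩ := this
    rw [← Int.natCast_dvd_natCast, Int.natAbs_dvd]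
    exact ⟨c, by rw [← hc]; simp [mul_comm]⟩
  have hne : g.natAbs ≠ 0 := by
    intro h
    have := hdvd a0 hmem
    rw [h] at this
    simp at this; omega
  have h1 : g.natAbs = 1 := by
    by_contra hne1
    obtain ⟨s, hs, hn⟩ := hg g.natAbs (by omega)
    exact hn (hdvd s hs)
  have hg' : g ∈ H' := by rw [hgen]; exact AddSubgroup.subset_closure rfl
  have h1' : (1:ℤ) ∈ H' := by
    rcases Int.natAbs_eq g with h | h
    · rw [h1] at h; rw [h] at hg'; exact hg'
    · rw [h1] at h; rw [h] at hg'; simpa using H'.neg_mem hg'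
  rw [eq_top_iff]
  intro x _
  obtain ⟨n, rfl⟩ := ZMod.intCast_surjective x
  have : n • (1:ℤ) ∈ H' := H'.zsmul_mem h1' n
  rw [hH', AddSubgroup.mem_comap] at this
  simpa using this

lemma core_ball (N : ℕ) (B : Finset ℤ) (Λ : Finset ℕ) (a0 : ℕ) [NeZero a0] (hmem : a0 ∈ Λ)
    (hΛ : ∀ s ∈ Λ, 1 ≤ s ∧ s ≤ a0) (haN : a0 ≤ N) (μ : ℝ)
    (hlam : ∀ s ∈ Λ, lam N B s ≤ μ) (C : Finset (ZMod a0))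
    (hC : ∀ c ∈ C, ∃ s ∈ Λ, c = (s : ZMod a0) ∨ c = -(s : ZMod a0)) (j : ℕ) :
    ∀ x ∈ j • C, lam N B (x.val : ℤ) ≤ 30 * j * μ := by
  have hμ : 0 ≤ μ := (lam_nonneg N B _).trans (hlam a0 hmem)
  induction j with
  | zero =>
    intro x hx
    simp at hx
    subst hx
    simp [lam_zero]
  | succ j ih =>
    intro x hx
    rw [succ_nsmul, Finset.mem_add] at hx
    obtain ⟨b, hb, c, hc, rfl⟩ := hx
    have hb' := ih b hb
    obtain ⟨s, hs, hsc⟩ := hC c hc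
    have hbl : b.val < a0 := ZMod.val_lt b
    have hxl : (b + c).val < a0 := ZMod.val_lt _
    have hs1 := hΛ s hs
    have l1 := hlam s hs
    have l2 := hlam a0 hmem
    have n1 := lam_neg N B s (by simp; omega)
    have n2 := lam_neg N B a0 (by simp; omega)
    have step : ∀ t : ℤ, lam N B t ≤ 10 * μ → ((b+c).val : ℤ) = b.val + t →
        lam N B ((b+c).val : ℤ) ≤ 30 * (j + 1 : ℕ) * μ := by
      intro t ht he
      rw [he]
      have := lam_add N B b.val t (by rw [Int.natAbs_natCast]; omega)
      push_cast
      linarith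
    rcases hsc with rfl | rfl
    · have hmod : (((b + s).val : ℤ) - (b.val + s)) % a0 = 0 := by
        apply Int.emod_eq_zero_of_dvd
        rw [← ZMod.intCast_zmod_eq_zero_iff_dvd]
        push_cast
        simp
      obtain ⟨q, hq⟩ := Int.dvd_of_emod_eq_zero hmod
      have hq1 : q = 0 ∨ q = -1 := by
        have a1 : q < 1 := by
          by_contra h; push Not at h
          nlinarith
        have a2 : -2 < q := by
          by_contra h; push Not at h
          nlinarith
        omega
      rcases hq1 with rfl | rfl
      · exact step s (by linarith) (by linarith)
      · refine step (s - a0) ?_ (by linarith)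
        have := lam_add N B s (-a0) (by simp; omega)
        rw [sub_eq_add_neg]; linarith
    · have hmod : (((b + -(s : ZMod a0)).val : ℤ) - (b.val - s)) % a0 = 0 := by
        apply Int.emod_eq_zero_of_dvd
        rw [← ZMod.intCast_zmod_eq_zero_iff_dvd]
        push_cast
        simp
      obtain ⟨q, hq⟩ := Int.dvd_of_emod_eq_zero hmod
      have hq1 : q = 0 ∨ q = 1 := by
        have a1 : q < 2 := by
          by_contra h; push Not at h
          nlinarith
        have a2 : -1 < q := by
          by_contra h; push Not at h
          nlinarith
        omega
      rcases hq1 with rfl | rfl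
      · exact step (-s) (by linarith) (by linarith)
      · refine step (-s + a0) ?_ (by linarith)
        have := lam_add N B (-s) (a0) (by simp; omega)
        linarith

lemma core (N : ℕ) (B : Finset ℤ) (hB : B.Nonempty) (Λ : Finset ℕ) (a0 : ℕ) (hmem : a0 ∈ Λ)
    (hΛ : ∀ s ∈ Λ, 1 ≤ s ∧ s ≤ a0) (haN : a0 ≤ N) (μ : ℝ) (hμ : 0 < μ)
    (hlam : ∀ s ∈ Λ, lam N B s ≤ μ) (hm : 34560 * μ ≤ (Λ.card : ℝ))
    (hM : 7680 * μ ≤ Mm N B) (hg : ∀ g : ℕ, 2 ≤ g → ∃ s ∈ Λ, ¬ g ∣ s) (H : ℕ) (hH : H ≤ 2 * a0) :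
    ∃ y : ℤ, (15/16 : ℝ) * H ≤ (((Finset.range H).filter (fun x : ℕ => y + x ∈ B)).card : ℝ) := by
  have ha1 : 1 ≤ a0 := (hΛ a0 hmem).1
  have : NeZero a0 := ⟨by omega⟩
  set M := Mm N B with hMdef
  have hM1 : 1 ≤ M := one_le_Mm N B hB
  set S : Finset (ZMod a0) := Λ.image (fun s : ℕ => (s : ZMod a0)) with hS
  set C : Finset (ZMod a0) := S ∪ S.image (fun c => -c) with hCdef
  have hCs : ∀ c ∈ C, ∃ s ∈ Λ, c = (s : ZMod a0) ∨ c = -(s : ZMod a0) := by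
    intro c hc
    simp only [hCdef, hS, Finset.mem_union, Finset.mem_image] at hc
    rcases hc with ⟨s, hs, rfl⟩ | ⟨_, ⟨s, hs, rfl⟩, rfl⟩
    · exact ⟨s, hs, Or.inl rfl⟩
    · exact ⟨s, hs, Or.inr rfl⟩
  have hmemC : ∀ s ∈ Λ, (s : ZMod a0) ∈ C := by
    intro s hs
    simp only [hCdef, hS, Finset.mem_union, Finset.mem_image]
    exact Or.inl ⟨s, hs, rfl⟩
  have h0C : (0 : ZMod a0) ∈ C := by simpa using hmemC a0 hmem
  have hnegC : ∀ c ∈ C, -c ∈ C := by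
    intro c hc
    simp only [hCdef, Finset.mem_union, Finset.mem_image] at hc ⊢
    rcases hc with hc | ⟨d, hd, rfl⟩
    · exact Or.inr ⟨c, hc, rfl⟩
    · left; simpa using hd
  have hgen : AddSubgroup.closure (C : Set (ZMod a0)) = ⊤ :=
    closure_top a0 ha1 Λ hmem hg _ (fun s hs => AddSubgroup.subset_closure (hmemC s hs))
  have hcardS : S.card = Λ.card := by
    apply Finset.card_image_of_injOn
    intro a ha b hb hab
    have h1 := hΛ a ha
    have h2 := hΛ b hb
    have hab' : (a : ZMod a0) = (b : ZMod a0) := hab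
    rw [ZMod.natCast_eq_natCast_iff'] at hab'
    rcases Nat.lt_or_ge a a0 with q | q <;> rcases Nat.lt_or_ge b a0 with q' | q'
    · rwa [Nat.mod_eq_of_lt q, Nat.mod_eq_of_lt q'] at hab'
    · have : b = a0 := by omega
      rw [this, Nat.mod_self, Nat.mod_eq_of_lt q] at hab'; omega
    · have : a = a0 := by omega
      rw [this, Nat.mod_self, Nat.mod_eq_of_lt q'] at hab'; omega
    · omega
  have hcardC : Λ.card ≤ C.card := by
    rw [← hcardS]; exact Finset.card_le_card Finset.subset_union_left
  have hΛpos : (0:ℝ) < Λ.card := by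
    have : 0 < Λ.card := Finset.card_pos.mpr ⟨a0, hmem⟩
    exact_mod_cast this
  set i := ⌈6 * M / Λ.card⌉₊ with hi
  have hi1 : 6 * M ≤ i * Λ.card := by
    have := Nat.le_ceil (6 * M / Λ.card)
    rwa [div_le_iff₀ hΛpos] at this
  have hi2 : (i : ℝ) * Λ.card ≤ 6 * M + Λ.card := by
    have := Nat.ceil_lt_add_one (a := 6 * M / Λ.card) (by positivity)
    have h2 : (i:ℝ) * Λ.card ≤ (6 * M / Λ.card + 1) * Λ.card := by gcongr
    rwa [add_mul, div_mul_cancel₀ _ hΛpos.ne', one_mul] at h2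
  have hiμ : 34560 * μ * i ≤ 6 * M + 34560 * μ := by
    -- `34560 μ (i - 1) ≤ card * (i-1) ≤ 6 M` if `i ≥ 1`
    rcases Nat.eq_zero_or_pos i with h | h
    · rw [h]; simp; nlinarith
    · have : (1:ℝ) ≤ i := by exact_mod_cast h
      nlinarith
  have hL : 30 * ((3 * i + 1 : ℕ) : ℝ) * μ ≤ M / 32 := by
    push_cast
    nlinarith
  have hball := core_ball N B Λ a0 hmem hΛ haN μ hlam C hCs (3 * i + 1)
  have hlow : ∀ x : ℕ, x < a0 → lam N B (x : ℤ) ≤ M / 32 := by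
    rcases ball_growth C h0C hnegC hgen i with h | h
    · intro x hx
      have := hball (x : ZMod a0) (by rw [h]; exact Finset.mem_univ _)
      rw [ZMod.val_cast_of_lt hx] at this
      linarith
    · exfalso
      set Y : Finset ℤ := ((3 * i + 1) • C).image (fun x => (x.val : ℤ)) with hY
      have hYc : Y.card = ((3 * i + 1) • C).card := by
        apply Finset.card_image_of_injective
        intro a b hab
        exact ZMod.val_injective a0 (Int.ofNat_inj.mp hab)
      obtain ⟨y, hy, hcount⟩ := average N B hB Y (M / 32) (by
        intro x hx
        rw [hY, Finset.mem_image] at hx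
        obtain ⟨c, hc, rfl⟩ := hx
        exact (hball c hc).trans hL)
      have hw := card_window N B ((Y.filter (fun x => y + x ∈ B)).image (fun x => y + x)) y
        (by
          intro b hb
          simp only [Finset.mem_image, Finset.mem_filter] at hb
          obtain ⟨x, hx, rfl⟩ := hb
          exact hx.2)
        (by
          intro b hb
          simp only [Finset.mem_image, Finset.mem_filter, hY] at hb
          obtain ⟨x, ⟨⟨c, _, rfl⟩, _⟩, rfl⟩ := hb
          have := ZMod.val_lt c
          omega)
      rw [Finset.card_image_of_injective _ (add_right_injective y)] at hw
      have hYbig : 6 * M ≤ Y.card := by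
        rw [hYc]
        have h' : (((i + 1) * C.card : ℕ) : ℝ) ≤ (((3 * i + 1) • C).card : ℝ) := by exact_mod_cast h
        have h'' : (Λ.card : ℝ) ≤ C.card := by exact_mod_cast hcardC
        push_cast at h'
        have : (i:ℝ) * Λ.card ≤ i * C.card := by gcongr
        nlinarith
      nlinarith
  have hall : ∀ x : ℕ, x < 2 * a0 → lam N B (x : ℤ) ≤ M / 16 := by
    intro x hx
    rcases Nat.lt_or_ge x a0 with h | h
    · linarith [hlow x h]
    · have h1 := hlow (x - a0) (by omega)
      have h2 := lam_add N B ((x - a0 : ℕ) : ℤ) a0 (by simp; omega)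
      have h3 : (((x - a0 : ℕ) : ℤ) + a0) = x := by omega
      rw [h3] at h2
      have h4 := hlam a0 hmem
      linarith
  obtain ⟨y, _, hcount⟩ := average N B hB ((Finset.range H).image (fun x : ℕ => (x : ℤ))) (M / 16) (by
    intro x hx
    simp only [Finset.mem_image, Finset.mem_range] at hx
    obtain ⟨w, hw, rfl⟩ := hx
    exact hall w (by omega))
  refine ⟨y, ?_⟩
  rw [Finset.card_image_of_injective _ Nat.cast_injective, Finset.card_range, Finset.filter_image,
    Finset.card_image_of_injective _ Nat.cast_injective, ← hMdef] at hcount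
  nlinarith

end

end TorusComb


namespace TorusComb

noncomputable section

/-- set of all sub-multiset sums. -/
def ss (T : Multiset ℕ) : Finset ℤ := (T.powerset.map (fun t => (t.sum : ℤ))).toFinset

lemma mem_ss (T : Multiset ℕ) (v : ℤ) : v ∈ ss T ↔ ∃ t ≤ T, (t.sum : ℤ) = v := by
  simp [ss]

lemma ss_nonempty (T : Multiset ℕ) : (ss T).Nonempty :=
  ⟨0, (mem_ss T 0).2 ⟨0, Multiset.zero_le _, by simp⟩⟩

lemma ss_cons (a : ℕ) (T : Multiset ℕ) : ss (a ::ₘ T) = ss T ∪ (ss T).image (· + (a : ℤ)) := by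
  ext v
  simp only [ss, Multiset.powerset_cons, Multiset.map_add, Multiset.map_map, Multiset.toFinset_add,
    Finset.mem_union, Finset.mem_image, Multiset.mem_toFinset, Multiset.mem_map, Function.comp]
  constructor
  · rintro (h | ⟨t, ht, rfl⟩)
    · exact Or.inl h
    · right; exact ⟨t.sum, ⟨t, ht, rfl⟩, by simp; ring⟩
  · rintro (h | ⟨_, ⟨t, ht, rfl⟩, rfl⟩)
    · exact Or.inl h
    · right; exact ⟨t, ht, by simp; ring⟩

lemma ss_add_mem (T U : Multiset ℕ) (v w : ℤ) (hv : v ∈ ss T) (hw : w ∈ ss U) :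
    v + w ∈ ss (T + U) := by
  rw [mem_ss] at *
  obtain ⟨t, ht, rfl⟩ := hv
  obtain ⟨u, hu, rfl⟩ := hw
  exact ⟨t + u, add_le_add ht hu, by simp⟩

def thr (N : ℕ) (μ : ℝ) (T : Multiset ℕ) : ℝ := min μ (Mm N (ss T) / 7680)

lemma thr_pos (N : ℕ) (μ : ℝ) (hμ : 0 < μ) (T : Multiset ℕ) : 0 < thr N μ T := by
  have := one_le_Mm N (ss T) (ss_nonempty T)
  exact lt_min hμ (by positivity)

lemma greedy (N : ℕ) (μ : ℝ) (hμ : 0 < μ) (V : Multiset ℕ) (hV : ∀ x ∈ V, x ≤ N) :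
    ∃ T ≤ V, (∀ a ∈ V - T, lam N (ss T) (a : ℤ) < thr N μ T) ∧
      (T.card : ℝ) ≤ 23041 * Real.log (2 * N + 2) + 3 * (2 * N + 2) / μ := by
  classical
  set F := V.powerset.toFinset.filter (fun T : Multiset ℕ =>
    (T.card : ℝ) ≤ 23041 * Real.log (Mm N (ss T)) + 3 * Mm N (ss T) / μ) with hF
  have hne : F.Nonempty := by
    refine ⟨0, ?_⟩
    have h1 := one_le_Mm N (ss 0) (ss_nonempty 0)
    have h2 := Real.log_nonneg h1
    simp only [hF, Finset.mem_filter, Multiset.mem_toFinset, Multiset.mem_powerset, Multiset.zero_le,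
      Multiset.card_zero, true_and]
    push_cast
    positivity
  obtain ⟨T, hT, hmax⟩ := Finset.exists_max_image F Multiset.card hne
  simp only [hF, Finset.mem_filter, Multiset.mem_toFinset, Multiset.mem_powerset] at hT hmax
  obtain ⟨hTV, hTc⟩ := hT
  have hM1 := one_le_Mm N (ss T) (ss_nonempty T)
  refine ⟨T, hTV, ?_, ?_⟩
  · intro a ha
    by_contra hcon
    push Not at hcon
    have haV : a ∈ V := Multiset.mem_of_le (Multiset.sub_le_self _ _) ha
    have hle : a ::ₘ T ≤ V := by
      have : {a} ≤ V - T := Multiset.singleton_le.2 ha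
      have h2 := add_le_add this (le_refl T)
      rwa [Multiset.sub_add_cancel hTV, Multiset.singleton_add] at h2
    have hgrow := Mm_union N (ss T) a (by simpa using hV a haV)
    rw [← ss_cons] at hgrow
    set M := Mm N (ss T) with hM
    set M' := Mm N (ss (a ::ₘ T)) with hM'
    have hge : M ≤ M' := by linarith [lam_nonneg N (ss T) a]
    have hlog : Real.log M ≤ Real.log M' := Real.log_le_log (by linarith) hge
    have hdiv : 3 * M / μ ≤ 3 * M' / μ := by gcongr
    have hbad : ((a ::ₘ T).card : ℝ) ≤ 23041 * Real.log M' + 3 * M' / μ := by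
      rw [Multiset.card_cons]
      push_cast
      rcases min_choice μ (M / 7680) with h | h
      · have h1 : μ ≤ lam N (ss T) a := by rw [thr, h] at hcon; exact hcon
        have h2 : 3 * M / μ + 1 ≤ 3 * M' / μ := by
          rw [div_add_one hμ.ne']
          gcongr
          linarith
        linarith
      · have h1 : M / 7680 ≤ lam N (ss T) a := by rw [thr, h] at hcon; exact hcon
        have h2 : M * (23041 / 23040) ≤ M' := by linarith
        have h3 : Real.log M + Real.log (23041/23040) ≤ Real.log M' := by
          rw [← Real.log_mul (by linarith) (by norm_num)]
          exact Real.log_le_log (by positivity) h2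
        have h4 := Real.one_sub_inv_le_log_of_pos (x := 23041/23040) (by norm_num)
        norm_num at h4
        linarith
    have := hmax (a ::ₘ T) ⟨hle, hbad⟩
    simp at this
  · have h1 := Mm_le N (ss T)
    have h2 : Real.log (Mm N (ss T)) ≤ Real.log (2 * N + 2) :=
      Real.log_le_log (by linarith) (by linarith)
    have h3 : 3 * Mm N (ss T) / μ ≤ 3 * (2 * N + 2) / μ := by
      gcongr; linarith
    linarith

lemma two_window (A B : Finset ℤ) (h : ℕ) (hh : 1 ≤ h) (ya yb : ℤ)
    (hA : (15/16 : ℝ) * (2 * h : ℕ) ≤ (((Finset.range (2 * h)).filter (fun x : ℕ => ya + x ∈ A)).card : ℝ))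
    (hB : (15/16 : ℝ) * (2 * h : ℕ) ≤ (((Finset.range (2 * h)).filter (fun x : ℕ => yb + x ∈ B)).card : ℝ))
    (u : ℕ) (hu1 : h ≤ u) (hu2 : u < 3 * h) : ∃ a ∈ A, ∃ b ∈ B, a + b = ya + yb + u := by
  set I := Finset.Ico (u + 1 - 2 * h) (min (u + 1) (2 * h)) with hI
  have hIc : h ≤ I.card := by
    rw [hI, Nat.card_Ico]; omega
  have e1 := Finset.card_filter_add_card_filter_not (s := Finset.range (2 * h)) (fun x : ℕ => ya + x ∈ A)
  have e2 := Finset.card_filter_add_card_filter_not (s := Finset.range (2 * h)) (fun x : ℕ => yb + x ∈ B)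
  rw [Finset.card_range] at e1 e2
  by_contra hcon
  push Not at hcon
  have hsub : I ⊆ (Finset.range (2 * h)).filter (fun x : ℕ => ¬ ya + x ∈ A) ∪
      ((Finset.range (2 * h)).filter (fun x : ℕ => ¬ yb + x ∈ B)).image (fun x => u - x) := by
    intro x hx
    rw [hI, Finset.mem_Ico] at hx
    rw [Finset.mem_union]
    by_cases hxA : ya + x ∈ A
    · right
      rw [Finset.mem_image]
      refine ⟨u - x, ?_, by omega⟩
      rw [Finset.mem_filter, Finset.mem_range]
      refine ⟨by omega, fun hb => ?_⟩
      refine hcon _ hxA _ hb ?_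
      have : ((u - x : ℕ) : ℤ) = u - x := by omega
      rw [this]; ring
    · left
      rw [Finset.mem_filter, Finset.mem_range]
      exact ⟨by omega, hxA⟩
  have hc := Finset.card_le_card hsub
  have hc2 := hc.trans (Finset.card_union_le _ _)
  have hc3 := hc2.trans (Nat.add_le_add_left Finset.card_image_le _)
  have hc4 := hIc.trans hc3
  have e1' : (((Finset.range (2 * h)).filter (fun x : ℕ => ya + x ∈ A)).card : ℝ) +
    (((Finset.range (2 * h)).filter (fun x : ℕ => ¬ ya + x ∈ A)).card : ℝ) = ((2 * h : ℕ) : ℝ) := by exact_mod_cast e1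
  have e2' : (((Finset.range (2 * h)).filter (fun x : ℕ => yb + x ∈ B)).card : ℝ) +
    (((Finset.range (2 * h)).filter (fun x : ℕ => ¬ yb + x ∈ B)).card : ℝ) = ((2 * h : ℕ) : ℝ) := by exact_mod_cast e2
  have hc5 : (h : ℝ) ≤ (((Finset.range (2 * h)).filter (fun x : ℕ => ¬ ya + x ∈ A)).card : ℝ) +
    (((Finset.range (2 * h)).filter (fun x : ℕ => ¬ yb + x ∈ B)).card : ℝ) := by exact_mod_cast hc4
  have : (1:ℝ) ≤ h := by exact_mod_cast hh
  push_cast at *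
  linarith

lemma interval_extend (T W : Multiset ℕ) (ζ : ℤ) (L : ℕ)
    (hT : ∀ v : ℤ, ζ ≤ v → v < ζ + L → v ∈ ss T) (hW : ∀ w ∈ W, w ≤ L) :
    ∀ v : ℤ, ζ ≤ v → v < ζ + L + W.sum → v ∈ ss (T + W) := by
  induction W using Multiset.induction with
  | empty => simpa using hT
  | cons a W ih =>
    have ih' := ih (fun w hw => hW w (Multiset.mem_cons_of_mem hw))
    have ha := hW a (Multiset.mem_cons_self a W)
    intro v hv1 hv2
    rw [Multiset.add_cons, ss_cons, Finset.mem_union, Finset.mem_image]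
    rw [Multiset.sum_cons] at hv2
    rw [Nat.cast_add] at hv2
    by_cases h : v < ζ + L + W.sum
    · exact Or.inl (ih' v hv1 h)
    · right
      refine ⟨v - a, ih' _ ?_ ?_, by ring⟩
      · have : (a:ℤ) ≤ L := by exact_mod_cast ha
        have h2 : (0:ℤ) ≤ W.sum := by positivity
        linarith
      · linarith

lemma block_one (Q : Multiset ℕ) (d : ℕ) (hd : 1 ≤ d) (hQ : d ≤ Q.card) :
    ∃ q ≤ Q, q ≠ 0 ∧ q.card ≤ d ∧ d ∣ q.sum := by
  have : NeZero d := ⟨by omega⟩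
  set l := Q.toList with hl
  have hlen : l.length = Q.card := by simp [hl]
  obtain ⟨i, j, hij, hf⟩ := Fintype.exists_ne_map_eq_of_card_lt
    (fun i : Fin (d + 1) => ((l.take i).sum : ZMod d)) (by simp [ZMod.card])
  have main : ∀ i j : Fin (d+1), i < j → ((l.take i).sum : ZMod d) = ((l.take j).sum : ZMod d) →
      ∃ q ≤ Q, q ≠ 0 ∧ q.card ≤ d ∧ d ∣ q.sum := by
    intro i j hij hf
    have hi := i.2
    have hj := j.2
    have hij' : (i : ℕ) < j := hij
    refine ⟨(((l.take j).drop i : List ℕ) : Multiset ℕ), ?_, ?_, ?_, ?_⟩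
    · have h1 : ((l.take j).drop i).Sublist l := (List.drop_sublist _ _).trans (List.take_sublist _ _)
      have h2 : (((l.take j).drop i : List ℕ) : Multiset ℕ) ≤ (l : Multiset ℕ) := Multiset.coe_le.2 h1.subperm
      rwa [hl, Multiset.coe_toList] at h2
    · intro h
      have : ((l.take j).drop i).length = 0 := by
        have := congrArg Multiset.card h
        simpa using this
      rw [List.length_drop, List.length_take] at this
      omega
    · rw [Multiset.coe_card, List.length_drop, List.length_take]; omega
    · rw [Multiset.sum_coe, ← ZMod.natCast_eq_zero_iff]
      have h1 : (l.take j).sum = (l.take i).sum + ((l.take j).drop i).sum := by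
        conv_lhs => rw [← List.take_append_drop i (l.take j)]
        rw [List.sum_append, List.take_take, min_eq_left hij'.le]
      rw [h1] at hf
      rw [Nat.cast_add] at hf
      exact (left_eq_add.mp hf)
  rcases lt_or_gt_of_ne hij with h | h
  · exact main i j h hf
  · exact main j i h hf.symm

lemma msum_mono {s t : Multiset ℕ} (h : s ≤ t) : s.sum ≤ t.sum := by
  obtain ⟨u, rfl⟩ := Multiset.le_iff_exists_add.1 h
  simp

lemma sum_le_card_mul (Q : Multiset ℕ) (n : ℕ) (hQ : ∀ x ∈ Q, x ≤ n) : Q.sum ≤ Q.card * n := by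
  have := Multiset.sum_le_card_nsmul Q n hQ
  simpa using this

lemma card_le_sum' (Q : Multiset ℕ) (hQ : ∀ x ∈ Q, 1 ≤ x) : Q.card ≤ Q.sum := by
  have := Multiset.card_nsmul_le_sum (s := Q) (a := 1) hQ
  simpa using this

lemma block (n d : ℕ) (hd : 1 ≤ d) (c : ℕ) : ∀ Q : Multiset ℕ, Q.card ≤ c → (∀ x ∈ Q, 1 ≤ x ∧ x ≤ n) →
    ∃ Q' : Multiset ℕ, (∀ x ∈ Q', 1 ≤ x ∧ x ≤ n) ∧ (∀ q' ≤ Q', ∃ q ≤ Q, q.sum = d * q'.sum) ∧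
      Q.sum ≤ d * Q'.sum + d * n := by
  induction c with
  | zero =>
    intro Q hc _
    have : Q = 0 := by simpa using hc
    subst this
    exact ⟨0, by simp, fun q' hq' => ⟨0, by simp, by simp [Multiset.le_zero.1 hq']⟩, by simp⟩
  | succ c ih =>
    intro Q hc hQ
    by_cases h : Q.card < d
    · refine ⟨0, by simp, fun q' hq' => ⟨0, by simp, by simp [Multiset.le_zero.1 hq']⟩, ?_⟩
      have := sum_le_card_mul Q n (fun x hx => (hQ x hx).2)
      have h2 : Q.card * n ≤ d * n := Nat.mul_le_mul_right _ h.le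
      simp; omega
    · obtain ⟨q, hqQ, hq0, hqc, b, hb⟩ := block_one Q d hd (by omega)
      have hqpos : 0 < q.card := Multiset.card_pos.2 hq0
      have hcardsub : (Q - q).card = Q.card - q.card := Multiset.card_sub hqQ
      obtain ⟨Q', h1, h2, h3⟩ := ih (Q - q) (by omega)
        (fun x hx => hQ x (Multiset.mem_of_le (Multiset.sub_le_self _ _) hx))
      have hqm : ∀ x ∈ q, 1 ≤ x ∧ x ≤ n := fun x hx => hQ x (Multiset.mem_of_le hqQ hx)
      have hs1 := sum_le_card_mul q n (fun x hx => (hqm x hx).2)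
      have hs2 := card_le_sum' q (fun x hx => (hqm x hx).1)
      have hb1 : 1 ≤ b := by
        rcases Nat.eq_zero_or_pos b with h0 | h0
        · subst h0; omega
        · exact h0
      have hb2 : b ≤ n := by
        have : d * b ≤ d * n := by
          rw [← hb]; exact hs1.trans (Nat.mul_le_mul_right _ hqc)
        exact Nat.le_of_mul_le_mul_left this hd
      refine ⟨b ::ₘ Q', ?_, ?_, ?_⟩
      · intro x hx
        rcases Multiset.mem_cons.1 hx with rfl | hx
        · exact ⟨hb1, hb2⟩
        · exact h1 x hx
      · intro q' hq'
        by_cases hbq : b ∈ q'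
        · obtain ⟨q'', rfl⟩ := Multiset.exists_cons_of_mem hbq
          obtain ⟨r, hr, hrs⟩ := h2 q'' ((Multiset.cons_le_cons_iff b).1 hq')
          refine ⟨q + r, ?_, ?_⟩
          · have := add_le_add (le_refl q) hr
            rwa [add_tsub_cancel_of_le hqQ] at this
          · rw [Multiset.sum_add, Multiset.sum_cons, hrs, hb]; ring
        · obtain ⟨r, hr, hrs⟩ := h2 q' ((Multiset.le_cons_of_notMem hbq).1 hq')
          exact ⟨r, hr.trans (Multiset.sub_le_self _ _), hrs⟩
      · have : Q.sum = q.sum + (Q - q).sum := by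
          rw [← Multiset.sum_add, add_tsub_cancel_of_le hqQ]
        rw [this, hb, Multiset.sum_cons]
        linarith [Nat.mul_add d b Q'.sum]

lemma prefix_sum (Q : Multiset ℕ) (n lo : ℕ) (hn : 1 ≤ n) (hQ : ∀ x ∈ Q, x ≤ n) (hlo : lo ≤ Q.sum) :
    ∃ q ≤ Q, lo ≤ q.sum ∧ q.sum < lo + n := by
  induction Q using Multiset.induction with
  | empty => exact ⟨0, le_refl _, hlo, by simp; omega⟩
  | cons a Q ih =>
    by_cases h : lo ≤ Q.sum
    · obtain ⟨q, h1, h2⟩ := ih (fun x hx => hQ x (Multiset.mem_cons_of_mem hx)) h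
      exact ⟨q, h1.trans (Multiset.le_cons_self _ _), h2⟩
    · refine ⟨a ::ₘ Q, le_refl _, hlo, ?_⟩
      have := hQ a (Multiset.mem_cons_self a Q)
      rw [Multiset.sum_cons]; omega

/-- indecomposable zero-sum pairs -/
def Atom (n : ℕ) (P Q : Multiset ℕ) : Prop :=
  (∀ x ∈ P, 1 ≤ x ∧ x ≤ n) ∧ (∀ x ∈ Q, 1 ≤ x ∧ x ≤ n) ∧ P.sum = Q.sum ∧
  ∀ P' ≤ P, ∀ Q' ≤ Q, P'.sum = Q'.sum → (P' = 0 ∧ Q' = 0) ∨ (P' = P ∧ Q' = Q)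

lemma Atom.symm {n : ℕ} {P Q : Multiset ℕ} (h : Atom n P Q) : Atom n Q P := by
  obtain ⟨h1, h2, h3, h4⟩ := h
  refine ⟨h2, h1, h3.symm, fun P' hP' Q' hQ' hs => ?_⟩
  rcases h4 Q' hQ' P' hP' hs.symm with ⟨a, b⟩ | ⟨a, b⟩
  · exact Or.inl ⟨b, a⟩
  · exact Or.inr ⟨b, a⟩

lemma atom_contra {n : ℕ} {P Q : Multiset ℕ} (hat : Atom n P Q) (hn : 1 ≤ n) (d : ℕ) (hd : 1 ≤ d)
    (V : Multiset ℕ) (hV : V.map (fun x => d * x) ≤ P) (ζ : ℤ)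
    (hcovv : ∀ v : ℤ, ζ ≤ v → v ≤ ζ + 2 * n → v ∈ ss V) : False := by
  obtain ⟨h1, h2, h3, h4⟩ := hat
  have hsum : ∀ t : Multiset ℕ, (t.map (fun x => d * x)).sum = d * t.sum := by
    intro t; rw [Multiset.sum_map_mul_left, Multiset.map_id']
  have hζ : 0 ≤ ζ := by
    obtain ⟨t, _, ht⟩ := (mem_ss V ζ).1 (hcovv ζ le_rfl (by linarith))
    rw [← ht]; positivity
  lift ζ to ℕ using hζ
  have hbig : d * (ζ + 2 * n) ≤ P.sum := by
    obtain ⟨t, ht, hts⟩ := (mem_ss V _).1 (hcovv (ζ + 2 * n) (by linarith) le_rfl)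
    have hts' : t.sum = ζ + 2 * n := by exact_mod_cast hts
    have h5 := msum_mono ((Multiset.map_le_map ht).trans hV)
    rw [hsum, hts'] at h5
    exact h5
  obtain ⟨Q', q1, q2, q3⟩ := block n d hd Q.card Q le_rfl h2
  have hQ' : ζ + n ≤ Q'.sum := by
    have : d * (ζ + n) ≤ d * Q'.sum := by nlinarith
    exact Nat.le_of_mul_le_mul_left this hd
  obtain ⟨q, hq, hqlo, hqhi⟩ := prefix_sum Q' n (max ζ 1) hn (fun x hx => (q1 x hx).2) (by omega)
  obtain ⟨r, hr, hrs⟩ := q2 q hq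
  obtain ⟨t, ht, hts⟩ := (mem_ss V _).1 (hcovv (q.sum : ℤ) (by omega) (by omega))
  have hts' : t.sum = q.sum := by exact_mod_cast hts
  have hP' := (Multiset.map_le_map (f := fun x => d * x) ht).trans hV
  rcases h4 _ hP' r hr (by rw [hsum, hts', hrs]) with ⟨_, hz⟩ | ⟨hz, _⟩
  · rw [hz] at hrs
    simp at hrs
    rcases hrs with h | h <;> omega
  · have := congrArg Multiset.sum hz
    rw [hsum, hts'] at this
    rw [← this] at hbig
    have := Nat.le_of_mul_le_mul_left hbig hd
    omega

lemma atom_mult {n : ℕ} {P Q : Multiset ℕ} (hat : Atom n P Q) (hn : 1 ≤ n) (x : ℕ) : P.count x ≤ n := by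
  by_contra hcon
  push Not at hcon
  have hmem : x ∈ P := Multiset.count_pos.1 (by omega)
  obtain ⟨h1, h2, h3, h4⟩ := hat
  have hx := h1 x hmem
  have hrep : ∀ j ≤ P.count x, Multiset.replicate j x ≤ P := fun j hj => Multiset.le_count_iff_replicate_le.1 hj
  have hsum : P.count x * x ≤ P.sum := by
    have := msum_mono (hrep _ le_rfl)
    simpa using this
  have hbig : x ≤ Q.card := by
    by_contra hc
    push Not at hc
    have h5 := sum_le_card_mul Q n (fun x hx => (h2 x hx).2)
    have h6 : Q.card * n ≤ x * n := Nat.mul_le_mul_right _ hc.le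
    have h7 : n * x < P.count x * x := Nat.mul_lt_mul_of_pos_right hcon (by omega)
    nlinarith
  obtain ⟨q, hq, hq0, hqc, b, hb⟩ := block_one Q x hx.1 hbig
  have hqs := sum_le_card_mul q n (fun y hy => (h2 y (Multiset.mem_of_le hq hy)).2)
  have hbn : b ≤ n := by
    have : x * b ≤ x * n := by rw [← hb]; exact hqs.trans (Nat.mul_le_mul_right _ hqc)
    exact Nat.le_of_mul_le_mul_left this hx.1
  rcases h4 _ (hrep b (by omega)) q hq (by simp [hb, mul_comm]) with ⟨_, h⟩ | ⟨h, _⟩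
  · exact hq0 h
  · have := congrArg (Multiset.count x) h
    simp at this
    omega

end

end TorusComb


namespace TorusComb

noncomputable section

def LamSet (N : ℕ) (μ : ℝ) (T : Multiset ℕ) : Finset ℕ :=
  (Finset.Icc 1 N).filter (fun x : ℕ => lam N (ss T) (x : ℤ) < thr N μ T)

open Classical in
def Cont (μ : ℝ) (n d : ℕ) (T' : Multiset ℕ) : Finset ℕ :=
  if ((n / d : ℕ) : ℝ) ≤ 34560 * μ then (Finset.Icc 1 (n / d)).image (fun x => d * x)
  else if ((LamSet (n / d) μ (T'.map (fun x => x / d))).card : ℝ) ≤ 34560 * μ then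
    (LamSet (n / d) μ (T'.map (fun x => x / d))).image (fun x => d * x)
  else ∅

lemma Cont_card (μ : ℝ) (hμ : 0 < μ) (n d : ℕ) (T' : Multiset ℕ) :
    ((Cont μ n d T').card : ℝ) ≤ 34560 * μ := by
  unfold Cont
  split_ifs with h1 h2
  · refine le_trans ?_ h1
    have := Finset.card_image_le (s := Finset.Icc 1 (n / d)) (f := fun x => d * x)
    rw [Nat.card_Icc] at this
    exact_mod_cast this
  · refine le_trans ?_ h2
    exact_mod_cast Finset.card_image_le
  · simp; positivity

lemma Cont_subset (μ : ℝ) (n d : ℕ) (hd : 1 ≤ d) (T' : Multiset ℕ) (x : ℕ) (hx : x ∈ Cont μ n d T') :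
    1 ≤ x ∧ x ≤ n := by
  have key : ∀ y ∈ Finset.Icc 1 (n / d), 1 ≤ d * y ∧ d * y ≤ n := by
    intro y hy
    rw [Finset.mem_Icc] at hy
    constructor
    · nlinarith
    · exact (Nat.mul_le_mul_left d hy.2).trans (Nat.mul_div_le n d)
  unfold Cont at hx
  split_ifs at hx with h1 h2
  · obtain ⟨y, hy, rfl⟩ := Finset.mem_image.1 hx
    exact key y hy
  · obtain ⟨y, hy, rfl⟩ := Finset.mem_image.1 hx
    exact key y (Finset.mem_filter.1 hy).1
  · simp at hx

lemma saturate (N : ℕ) (μ : ℝ) (hμ : 0 < μ) (T R : Multiset ℕ) (hR : ∀ x ∈ R, 1 ≤ x ∧ x ≤ N)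
    (hlam : ∀ a ∈ R, lam N (ss T) (a : ℤ) < thr N μ T)
    (hcard : 34560 * μ < ((LamSet N μ T).card : ℝ))
    (hg : ∀ g : ℕ, 2 ≤ g → ∃ s ∈ R, ¬ g ∣ s) (h : ℕ) (hh : h ∈ R) :
    ∃ y : ℤ, (15/16 : ℝ) * (2 * h : ℕ) ≤ (((Finset.range (2 * h)).filter (fun x : ℕ => y + x ∈ ss T)).card : ℝ) := by
  have hRL : ∀ x ∈ R, x ∈ LamSet N μ T := by
    intro x hx
    rw [LamSet, Finset.mem_filter, Finset.mem_Icc]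
    exact ⟨hR x hx, hlam x hx⟩
  obtain ⟨a0, ha0, hmax⟩ := Finset.exists_max_image (LamSet N μ T) id ⟨h, hRL h hh⟩
  have hmem : ∀ s ∈ LamSet N μ T, 1 ≤ s ∧ s ≤ N := by
    intro s hs
    rw [LamSet, Finset.mem_filter, Finset.mem_Icc] at hs
    exact hs.1
  refine core N (ss T) (ss_nonempty T) (LamSet N μ T) a0 ha0 (fun s hs => ⟨(hmem s hs).1, hmax s hs⟩)
    (hmem a0 ha0).2 (thr N μ T) (thr_pos N μ hμ T) ?_ ?_ ?_ ?_ (2 * h) ?_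
  · intro s hs
    rw [LamSet, Finset.mem_filter] at hs
    exact hs.2.le
  · have : thr N μ T ≤ μ := min_le_left _ _
    linarith
  · have : thr N μ T ≤ Mm N (ss T) / 7680 := min_le_right _ _
    linarith
  · intro g hg2
    obtain ⟨s, hs, hn⟩ := hg g hg2
    exact ⟨s, hRL s hs, hn⟩
  · have := hmax h (hRL h hh)
    simp at this
    omega

lemma sat_contra {n : ℕ} {P Q : Multiset ℕ} (hat : Atom n P Q) (hn : 1 ≤ n) (d : ℕ) (hd : 1 ≤ d)
    (N : ℕ) (μ : ℝ) (hμ : 0 < μ) (Ta Tb W : Multiset ℕ)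
    (hV : (Ta + (Tb + W)).map (fun x => d * x) ≤ P)
    (hR : ∀ x ∈ Tb + W, 1 ≤ x ∧ x ≤ N)
    (hla : ∀ a ∈ Tb + W, lam N (ss Ta) (a : ℤ) < thr N μ Ta)
    (hlb : ∀ a ∈ W, lam N (ss Tb) (a : ℤ) < thr N μ Tb)
    (hca : 34560 * μ < ((LamSet N μ Ta).card : ℝ))
    (hcb : 34560 * μ < ((LamSet N μ Tb).card : ℝ))
    (hg : ∀ g : ℕ, 2 ≤ g → ∃ s ∈ W, ¬ g ∣ s) (hW : 2 * n < W.sum) : False := by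
  have hWR : ∀ x ∈ W, x ∈ Tb + W := fun x hx => Multiset.mem_add.2 (Or.inr hx)
  have hne : W.toFinset.Nonempty := by
    rw [Multiset.toFinset_nonempty]
    rintro rfl
    simp at hW
  obtain ⟨h, hh, hmax⟩ := Finset.exists_max_image W.toFinset id hne
  rw [Multiset.mem_toFinset] at hh
  obtain ⟨ya, hya⟩ := saturate N μ hμ Ta (Tb + W) hR hla hca
    (fun g hg2 => by obtain ⟨s, hs, hn⟩ := hg g hg2; exact ⟨s, hWR s hs, hn⟩) h (hWR h hh)
  obtain ⟨yb, hyb⟩ := saturate N μ hμ Tb W (fun x hx => hR x (hWR x hx)) hlb hcb hg h hh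
  have hh1 : 1 ≤ h := (hR h (hWR h hh)).1
  have hT : ∀ v : ℤ, ya + yb + h ≤ v → v < ya + yb + h + (2 * h : ℕ) → v ∈ ss (Ta + Tb) := by
    intro v h1 h2
    obtain ⟨a, ha, b, hb, hab⟩ := two_window (ss Ta) (ss Tb) h hh1 ya yb hya hyb (v - ya - yb).toNat
      (by omega) (by omega)
    have : v = a + b := by rw [hab]; omega
    rw [this]
    exact ss_add_mem _ _ _ _ ha hb
  have hI := interval_extend (Ta + Tb) W (ya + yb + h) (2 * h) hT (by
    intro w hw
    have := hmax w (Multiset.mem_toFinset.2 hw)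
    simp at this
    omega)
  refine atom_contra hat hn d hd (Ta + (Tb + W)) hV (ya + yb + h) (fun v h1 h2 => ?_)
  rw [← add_assoc]
  exact hI v h1 (by omega)

lemma lemmaP {n : ℕ} (hn : 1 ≤ n) (μ E : ℝ) (hμ : 0 < μ) (hE : 0 < E)
    (hsize : ∀ d : ℕ, 1 ≤ d → d ≤ n → 34560 * μ < ((n / d : ℕ) : ℝ) →
      23041 * Real.log (2 * (n / d : ℕ) + 2) + 3 * (2 * (n / d : ℕ) + 2) / μ ≤ E / (8 * Real.sqrt d))
    {P Q : Multiset ℕ} (hat : Atom n P Q) (V : Multiset ℕ) (hVP : V ≤ P) :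
    ∃ (X Y T' : Multiset ℕ) (d : ℕ), V = X + Y ∧ T' ≤ X ∧ 1 ≤ d ∧ d ≤ n ∧ (X.card : ℝ) ≤ E ∧
      (((∀ y ∈ Y, d ∣ y) ∧ Y.sum ≤ d * (2 * n)) ∨ (∀ y ∈ Y, y ∈ Cont μ n d T')) := by
  classical
  have hVm : ∀ x ∈ V, 1 ≤ x ∧ x ≤ n := fun x hx => hat.1 x (Multiset.mem_of_le hVP hx)
  set F := (Finset.Icc 1 n).filter (fun d : ℕ =>
    ((V.filter (fun x => ¬ d ∣ x)).card : ℝ) ≤ E * (1 - 1 / Real.sqrt d)) with hF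
  have hne : F.Nonempty := by
    refine ⟨1, ?_⟩
    rw [hF, Finset.mem_filter, Finset.mem_Icc]
    refine ⟨⟨le_rfl, hn⟩, ?_⟩
    have : V.filter (fun x => ¬ 1 ∣ x) = 0 := by
      rw [Multiset.filter_eq_nil]; simp
    rw [this]; simp
  obtain ⟨d, hd, hdmax⟩ := Finset.exists_max_image F id hne
  rw [hF, Finset.mem_filter, Finset.mem_Icc] at hd
  obtain ⟨⟨hd1, hdn⟩, hX0⟩ := hd
  have hdR : (1:ℝ) ≤ d := by exact_mod_cast hd1
  have hsd : 1 ≤ Real.sqrt d := Real.one_le_sqrt.2 hdR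
  have hdiv0 : 0 < 1 / Real.sqrt d := by positivity
  set X0 := V.filter (fun x => ¬ d ∣ x) with hX0def
  set R0 := V.filter (fun x => d ∣ x) with hR0def
  have hVsplit : V = X0 + R0 := by
    rw [add_comm]; exact (Multiset.filter_add_not _ V).symm
  set N := n / d with hNdef
  set V' := R0.map (fun x => x / d) with hV'
  have hback : V'.map (fun x => d * x) = R0 := by
    rw [hV', Multiset.map_map]
    conv_rhs => rw [← Multiset.map_id R0]
    apply Multiset.map_congr rfl
    intro x hx
    exact Nat.mul_div_cancel' (Multiset.mem_filter.1 hx).2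
  have hV'm : ∀ x ∈ V', 1 ≤ x ∧ x ≤ N := by
    intro x hx
    rw [hV', Multiset.mem_map] at hx
    obtain ⟨y, hy, rfl⟩ := hx
    obtain ⟨hyV, hyd⟩ := Multiset.mem_filter.1 hy
    have := hVm y hyV
    exact ⟨Nat.div_pos (Nat.le_of_dvd (by omega) hyd) (by omega), Nat.div_le_div_right this.2⟩
  have hscale : ∀ T : Multiset ℕ, (T.map (fun x => d * x)).map (fun x => x / d) = T := by
    intro T
    rw [Multiset.map_map]
    conv_rhs => rw [← Multiset.map_id T]
    apply Multiset.map_congr rfl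
    intro x _
    exact Nat.mul_div_cancel_left x (by omega)
  by_cases hN : (N : ℝ) ≤ 34560 * μ
  · refine ⟨X0, R0, 0, d, hVsplit, Multiset.zero_le _, hd1, hdn, ?_, Or.inr ?_⟩
    · refine hX0.trans ?_; nlinarith
    · intro y hy
      rw [Cont, if_pos hN]
      rw [← hback, Multiset.mem_map] at hy
      obtain ⟨x, hx, rfl⟩ := hy
      exact Finset.mem_image.2 ⟨x, Finset.mem_Icc.2 (hV'm x hx), rfl⟩
  have hN' := hN
  push Not at hN'
  have hsz := hsize d hd1 hdn hN'
  obtain ⟨Ta, hTa, hla, hTac⟩ := greedy N μ hμ V' (fun x hx => (hV'm x hx).2)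
  have hTac' : (Ta.card : ℝ) ≤ E / (8 * Real.sqrt d) := hTac.trans hsz
  have hEd : E / (8 * Real.sqrt d) = E * (1 / Real.sqrt d) / 8 := by field_simp
  rw [hEd] at hTac'
  set U := V' - Ta with hU
  have hV'U : V' = Ta + U := (add_tsub_cancel_of_le hTa).symm
  have hUm : ∀ x ∈ U, 1 ≤ x ∧ x ≤ N := fun x hx => hV'm x (by rw [hV'U]; exact Multiset.mem_add.2 (Or.inr hx))
  by_cases hca : ((LamSet N μ Ta).card : ℝ) ≤ 34560 * μ
  · refine ⟨X0 + Ta.map (fun x => d * x), U.map (fun x => d * x), Ta.map (fun x => d * x), d, ?_,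
      Multiset.le_add_left _ _, hd1, hdn, ?_, Or.inr ?_⟩
    · rw [add_assoc, ← Multiset.map_add, ← hV'U, hback]; exact hVsplit
    · rw [Multiset.card_add, Multiset.card_map]; push_cast
      nlinarith
    · intro y hy
      rw [Cont, if_neg hN, hscale, if_pos hca]
      rw [Multiset.mem_map] at hy
      obtain ⟨x, hx, rfl⟩ := hy
      refine Finset.mem_image.2 ⟨x, ?_, rfl⟩
      rw [LamSet, Finset.mem_filter, Finset.mem_Icc]
      exact ⟨hUm x hx, hla x hx⟩
  push Not at hca
  obtain ⟨Tb, hTb, hlb, hTbc⟩ := greedy N μ hμ U (fun x hx => (hUm x hx).2)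
  have hTbc' : (Tb.card : ℝ) ≤ E / (8 * Real.sqrt d) := hTbc.trans hsz
  rw [hEd] at hTbc'
  set W := U - Tb with hW
  have hUW : U = Tb + W := (add_tsub_cancel_of_le hTb).symm
  have hWm : ∀ x ∈ W, 1 ≤ x ∧ x ≤ N := fun x hx => hUm x (by rw [hUW]; exact Multiset.mem_add.2 (Or.inr hx))
  have hVeq : V = (X0 + Ta.map (fun x => d * x) + Tb.map (fun x => d * x)) + W.map (fun x => d * x) := by
    rw [add_assoc, add_assoc, ← Multiset.map_add, ← hUW, ← Multiset.map_add, ← hV'U, hback]; exact hVsplit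
  have hXcard : ((X0 + Ta.map (fun x => d * x) + Tb.map (fun x => d * x)).card : ℝ) ≤
      E * (1 - 3/4 * (1 / Real.sqrt d)) := by
    rw [Multiset.card_add, Multiset.card_add, Multiset.card_map, Multiset.card_map]; push_cast
    nlinarith
  have hXcard' : ((X0 + Ta.map (fun x => d * x) + Tb.map (fun x => d * x)).card : ℝ) ≤ E := by
    nlinarith
  by_cases hcb : ((LamSet N μ Tb).card : ℝ) ≤ 34560 * μ
  · refine ⟨_, _, Tb.map (fun x => d * x), d, hVeq,
      Multiset.le_add_left _ _, hd1, hdn, hXcard', Or.inr ?_⟩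
    · intro y hy
      rw [Cont, if_neg hN, hscale, if_pos hcb]
      rw [Multiset.mem_map] at hy
      obtain ⟨x, hx, rfl⟩ := hy
      refine Finset.mem_image.2 ⟨x, ?_, rfl⟩
      rw [LamSet, Finset.mem_filter, Finset.mem_Icc]
      exact ⟨hWm x hx, hlb x hx⟩
  push Not at hcb
  refine ⟨_, _, 0, d, hVeq, Multiset.zero_le _, hd1, hdn, hXcard', Or.inl ⟨?_, ?_⟩⟩
  · intro y hy
    rw [Multiset.mem_map] at hy
    obtain ⟨x, _, rfl⟩ := hy
    exact Dvd.intro x rfl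
  · rw [Multiset.sum_map_mul_left, Multiset.map_id']
    apply Nat.mul_le_mul_left
    by_contra hbig
    push Not at hbig
    refine sat_contra hat hn d hd1 N μ hμ Ta Tb W ?_ ?_ ?_ hlb hca hcb ?_ hbig
    · rw [← hUW, ← hV'U, hback]
      exact (Multiset.filter_le _ _).trans hVP
    · rw [← hUW]; exact hUm
    · rw [← hUW]; exact hla
    · intro g hg2
      by_contra hall
      push Not at hall
      have hWne : W ≠ 0 := by rintro h; rw [h] at hbig; simp at hbig
      obtain ⟨s, hs⟩ := Multiset.exists_mem_of_ne_zero hWne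
      have hsm := hWm s hs
      have hgs : g ≤ s := Nat.le_of_dvd (by omega) (hall s hs)
      have hgd : g * d ≤ n := by
        have h1 : d * s ≤ n := (Nat.mul_le_mul_left d hsm.2).trans (Nat.mul_div_le n d)
        nlinarith
      have hmem : g * d ∈ F := by
        rw [hF, Finset.mem_filter, Finset.mem_Icc]
        refine ⟨⟨by nlinarith, hgd⟩, ?_⟩
        have hle : V.filter (fun x => ¬ (g * d) ∣ x) ≤ X0 + Ta.map (fun x => d * x) + Tb.map (fun x => d * x) := by
          have hz : (W.map (fun x => d * x)).filter (fun x => ¬ (g * d) ∣ x) = 0 := by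
            rw [Multiset.filter_eq_nil]
            intro a ha
            rw [Multiset.mem_map] at ha
            obtain ⟨x, hx, rfl⟩ := ha
            rw [not_not, mul_comm g d]
            exact Nat.mul_dvd_mul_left d (hall x hx)
          rw [hVeq, Multiset.filter_add, hz, add_zero]
          exact Multiset.filter_le _ _
        have hle' : ((V.filter (fun x => ¬ (g * d) ∣ x)).card : ℝ) ≤
          ((X0 + Ta.map (fun x => d * x) + Tb.map (fun x => d * x)).card : ℝ) := by
          exact_mod_cast Multiset.card_le_card hle
        refine (hle'.trans hXcard).trans ?_
        have hsq : 1 / Real.sqrt ((g * d : ℕ) : ℝ) ≤ 3/4 * (1 / Real.sqrt d) := by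
          have h1 : (4/3) * Real.sqrt d ≤ Real.sqrt ((g * d : ℕ) : ℝ) := by
            apply Real.le_sqrt_of_sq_le
            rw [mul_pow, Real.sq_sqrt (by linarith)]
            push_cast
            have : (2:ℝ) ≤ g := by exact_mod_cast hg2
            nlinarith
          have h2 : 3/4 * (1 / Real.sqrt d) = 1 / ((4/3) * Real.sqrt d) := by field_simp
          rw [h2]
          exact one_div_le_one_div_of_le (by positivity) h1
        apply mul_le_mul_of_nonneg_left _ hE.le
        linarith
      have hfin : g * d ≤ d := hdmax _ hmem
      nlinarith

end

end TorusComb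


namespace TorusComb

noncomputable section

lemma count_seq (Λ : Finset ℕ) (k : ℕ) : ∃ F : Finset (Multiset ℕ), F.card ≤ (Λ.card + 1) ^ k ∧
    ∀ X : Multiset ℕ, (∀ x ∈ X, x ∈ Λ) → X.card ≤ k → X ∈ F := by
  classical
  induction k with
  | zero =>
    refine ⟨{0}, by simp, fun X _ hX => ?_⟩
    simpa using hX
  | succ k ih =>
    obtain ⟨F, hF, hm⟩ := ih
    refine ⟨F ∪ Finset.image₂ (fun a X => a ::ₘ X) Λ F, ?_, ?_⟩
    · refine (Finset.card_union_le _ _).trans ?_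
      have := Finset.card_image₂_le (fun (a : ℕ) (X : Multiset ℕ) => a ::ₘ X) Λ F
      rw [pow_succ]
      nlinarith
    · intro X hX hc
      rw [Finset.mem_union]
      induction X using Multiset.induction with
      | empty => exact Or.inl (hm 0 hX (by simp))
      | cons a X _ =>
        right
        rw [Multiset.card_cons] at hc
        exact Finset.mem_image₂_of_mem (hX a (Multiset.mem_cons_self a X))
          (hm X (fun x hx => hX x (Multiset.mem_cons_of_mem hx)) (by omega))

lemma count_two (Λ : Finset ℕ) : ∀ k : ℕ, ∃ F : Finset (Multiset ℕ), F.card ≤ 2 ^ (Λ.card + k) ∧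
    ∀ X : Multiset ℕ, (∀ x ∈ X, x ∈ Λ) → X.card ≤ k → X ∈ F := by
  classical
  induction Λ using Finset.induction_on with
  | empty =>
    intro k
    refine ⟨{0}, ?_, fun X hX _ => ?_⟩
    · simpa using Nat.one_le_two_pow
    · rw [Finset.mem_singleton]
      exact Multiset.eq_zero_of_forall_notMem (fun a ha => by simpa using hX a ha)
  | insert a Λ ha ih =>
    intro k
    rw [Finset.card_insert_of_notMem ha]
    induction k with
    | zero =>
      refine ⟨{0}, ?_, fun X _ hX => by simpa using hX⟩
      simpa using Nat.one_le_two_pow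
    | succ k ihk =>
      obtain ⟨F1, h1, m1⟩ := ih (k + 1)
      obtain ⟨F2, h2, m2⟩ := ihk
      refine ⟨F1 ∪ F2.image (fun X => a ::ₘ X), ?_, ?_⟩
      · refine (Finset.card_union_le _ _).trans ?_
        have := Finset.card_image_le (s := F2) (f := fun X => a ::ₘ X)
        have e1 : 2 ^ (Λ.card + 1 + (k + 1)) = 2 ^ (Λ.card + (k + 1)) + 2 ^ (Λ.card + 1 + k) := by ring
        omega
      · intro X hX hc
        rw [Finset.mem_union]
        by_cases haX : a ∈ X
        · right
          obtain ⟨X', rfl⟩ := Multiset.exists_cons_of_mem haX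
          rw [Multiset.card_cons] at hc
          exact Finset.mem_image_of_mem _ (m2 X' (fun x hx => hX x (Multiset.mem_cons_of_mem hx)) (by omega))
        · left
          refine m1 X (fun x hx => ?_) hc
          rcases Finset.mem_insert.1 (hX x hx) with rfl | h
          · exact absurd hx haX
          · exact h

lemma count_mult (Λ : Finset ℕ) (m : ℕ) : ∃ F : Finset (Multiset ℕ), F.card ≤ (m + 1) ^ Λ.card ∧
    ∀ X : Multiset ℕ, (∀ x ∈ X, x ∈ Λ) → (∀ x, X.count x ≤ m) → X ∈ F := by
  classical
  induction Λ using Finset.induction_on with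
  | empty =>
    refine ⟨{0}, by simp, fun X hX _ => ?_⟩
    rw [Finset.mem_singleton]
    exact Multiset.eq_zero_of_forall_notMem (fun a ha => by simpa using hX a ha)
  | insert a Λ ha ih =>
    obtain ⟨F, h1, h2⟩ := ih
    refine ⟨Finset.image₂ (fun j X => Multiset.replicate j a + X) (Finset.range (m + 1)) F, ?_, ?_⟩
    · refine (Finset.card_image₂_le _ _ _).trans ?_
      rw [Finset.card_range, Finset.card_insert_of_notMem ha, pow_succ, mul_comm]
      exact Nat.mul_le_mul_right _ h1
    · intro X hX hc
      rw [Finset.mem_image₂]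
      refine ⟨X.count a, Finset.mem_range.2 (Nat.lt_succ_of_le (hc a)), X.filter (fun x => ¬ x = a), ?_, ?_⟩
      · refine h2 _ (fun x hx => ?_) (fun x => ?_)
        · obtain ⟨hx1, hx2⟩ := Multiset.mem_filter.1 hx
          rcases Finset.mem_insert.1 (hX x hx1) with h | h
          · exact absurd h hx2
          · exact h
        · exact (Multiset.count_le_of_le x (Multiset.filter_le _ _)).trans (hc x)
      · rw [← Multiset.filter_eq']
        exact Multiset.filter_add_not _ X

lemma count_part (n : ℕ) : ∃ F : Finset (Multiset ℕ), F.card ≤ (2 * n + 1) ^ (3 * Nat.sqrt n + 1) ∧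
    ∀ Z : Multiset ℕ, (∀ z ∈ Z, 1 ≤ z) → Z.sum ≤ 2 * n → Z ∈ F := by
  classical
  set q := Nat.sqrt n with hq
  obtain ⟨F1, h1, m1⟩ := count_mult (Finset.Icc 1 q) (2 * n)
  obtain ⟨F2, h2, m2⟩ := count_seq (Finset.Icc 1 (2 * n)) (2 * q + 1)
  rw [Nat.card_Icc, Nat.add_sub_cancel] at h1 h2
  refine ⟨Finset.image₂ (fun X Y => X + Y) F1 F2, ?_, ?_⟩
  · refine (Finset.card_image₂_le _ _ _).trans ?_
    have : (2 * n + 1) ^ (3 * q + 1) = (2 * n + 1) ^ q * (2 * n + 1) ^ (2 * q + 1) := by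
      rw [← pow_add]; congr 1; ring
    rw [this]
    exact Nat.mul_le_mul h1 h2
  · intro Z hZ hs
    rw [Finset.mem_image₂]
    refine ⟨Z.filter (fun z => z ≤ q), ?_, Z.filter (fun z => ¬ z ≤ q), ?_, Multiset.filter_add_not _ Z⟩
    · refine m1 _ (fun x hx => ?_) (fun x => ?_)
      · obtain ⟨a, b⟩ := Multiset.mem_filter.1 hx
        exact Finset.mem_Icc.2 ⟨hZ x a, b⟩
      · refine (Multiset.count_le_card _ _).trans ?_
        refine (Multiset.card_le_card (Multiset.filter_le _ _)).trans ?_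
        exact (card_le_sum' Z hZ).trans hs
    · refine m2 _ (fun x hx => ?_) ?_
      · obtain ⟨a, _⟩ := Multiset.mem_filter.1 hx
        exact Finset.mem_Icc.2 ⟨hZ x a, (Multiset.le_sum_of_mem a).trans hs⟩
      · have h3 := Multiset.card_nsmul_le_sum (s := Z.filter (fun z => ¬ z ≤ q)) (a := q + 1) (by
          intro x hx
          have := (Multiset.mem_filter.1 hx).2
          omega)
        have h4 := msum_mono (Multiset.filter_le (fun z => ¬ z ≤ q) Z)
        rw [smul_eq_mul] at h3
        have h5 : n < (q + 1) * (q + 1) := Nat.lt_succ_sqrt n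
        have h6 : (Z.filter (fun z => ¬ z ≤ q)).card * (q + 1) < (2 * (q + 1)) * (q + 1) := by nlinarith
        have := Nat.lt_of_mul_lt_mul_right h6
        omega

def Fam2 (n : ℕ) (F Part : Finset (Multiset ℕ)) (G : ℕ → Multiset ℕ → Finset (Multiset ℕ)) :
    Finset (Multiset ℕ) := by
  classical
  exact (Finset.Icc 1 n).biUnion fun d => F.biUnion fun T => F.biUnion fun X =>
    (Part.image (fun Z => X + Z.map (fun x => d * x))) ∪ (G d T).image (fun Y => X + Y)

lemma Fam2_card (n : ℕ) (F Part : Finset (Multiset ℕ)) (G : ℕ → Multiset ℕ → Finset (Multiset ℕ))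
    (g : ℕ) (hG : ∀ d, 1 ≤ d → ∀ T, (G d T).card ≤ g) :
    (Fam2 n F Part G).card ≤ n * (F.card * (F.card * (Part.card + g))) := by
  classical
  unfold Fam2
  have h := Finset.card_biUnion_le_card_mul (Finset.Icc 1 n) (fun d => F.biUnion fun T => F.biUnion fun X =>
    (Part.image (fun Z => X + Z.map (fun x => d * x))) ∪ (G d T).image (fun Y => X + Y))
    (F.card * (F.card * (Part.card + g))) (by
      intro d hd
      apply Finset.card_biUnion_le_card_mul
      intro T _
      apply Finset.card_biUnion_le_card_mul
      intro X _
      refine (Finset.card_union_le _ _).trans (Nat.add_le_add Finset.card_image_le ?_)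
      exact Finset.card_image_le.trans (hG d (Finset.mem_Icc.1 hd).1 T))
  rw [Nat.card_Icc, Nat.add_sub_cancel] at h
  convert h

lemma Fam2_mem (n : ℕ) (F Part : Finset (Multiset ℕ)) (G : ℕ → Multiset ℕ → Finset (Multiset ℕ))
    (hPart : ∀ Z : Multiset ℕ, (∀ z ∈ Z, 1 ≤ z) → Z.sum ≤ 2 * n → Z ∈ Part)
    (X Y T : Multiset ℕ) (d : ℕ) (hd1 : 1 ≤ d) (hdn : d ≤ n) (hX : X ∈ F) (hT : T ∈ F)
    (hY1 : ∀ y ∈ Y, 1 ≤ y)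
    (h : ((∀ y ∈ Y, d ∣ y) ∧ Y.sum ≤ d * (2 * n)) ∨ Y ∈ G d T) : X + Y ∈ Fam2 n F Part G := by
  classical
  unfold Fam2
  simp only [Finset.mem_biUnion]
  refine ⟨d, Finset.mem_Icc.2 ⟨hd1, hdn⟩, T, hT, X, hX, ?_⟩
  rw [Finset.mem_union]
  rcases h with ⟨hdiv, hs⟩ | h
  · left
    have hback : (Y.map (fun x => x / d)).map (fun x => d * x) = Y := by
      rw [Multiset.map_map]
      conv_rhs => rw [← Multiset.map_id Y]
      apply Multiset.map_congr rfl
      intro x hx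
      exact Nat.mul_div_cancel' (hdiv x hx)
    refine Finset.mem_image.2 ⟨Y.map (fun x => x / d), hPart _ ?_ ?_, by rw [hback]⟩
    · intro z hz
      obtain ⟨y, hy, rfl⟩ := Multiset.mem_map.1 hz
      exact Nat.div_pos (Nat.le_of_dvd (by have := hY1 y hy; omega) (hdiv y hy)) (by omega)
    · rw [← hback, Multiset.sum_map_mul_left, Multiset.map_id'] at hs
      exact Nat.le_of_mul_le_mul_left hs hd1
  · right
    exact Finset.mem_image.2 ⟨Y, h, rfl⟩

lemma family {n : ℕ} (hn : 1 ≤ n) (μ1 E1 μ2 E2 : ℝ) (hμ1 : 0 < μ1) (hE1 : 0 < E1) (hμ2 : 0 < μ2)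
    (hE2 : 0 < E2)
    (hs1 : ∀ d : ℕ, 1 ≤ d → d ≤ n → 34560 * μ1 < ((n / d : ℕ) : ℝ) →
      23041 * Real.log (2 * (n / d : ℕ) + 2) + 3 * (2 * (n / d : ℕ) + 2) / μ1 ≤ E1 / (8 * Real.sqrt d))
    (hs2 : ∀ d : ℕ, 1 ≤ d → d ≤ n → 34560 * μ2 < ((n / d : ℕ) : ℝ) →
      23041 * Real.log (2 * (n / d : ℕ) + 2) + 3 * (2 * (n / d : ℕ) + 2) / μ2 ≤ E2 / (8 * Real.sqrt d)) :
    ∃ F : Finset (Multiset ℕ), F.card ≤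
      n * ((n + 1) ^ ⌊E1⌋₊ * ((n + 1) ^ ⌊E1⌋₊ * ((2 * n + 1) ^ (3 * Nat.sqrt n + 1) +
        n * (2 ^ (⌊34560 * μ1⌋₊ + ⌊E2⌋₊) * (2 ^ (⌊34560 * μ1⌋₊ + ⌊E2⌋₊) * ((2 * n + 1) ^ (3 * Nat.sqrt n + 1)
          + (n + 1) ^ ⌊34560 * μ2⌋₊)))))) ∧
      ∀ P Q : Multiset ℕ, Atom n P Q → P ∈ F := by
  obtain ⟨Part, hPc, hPm⟩ := count_part n
  obtain ⟨A1, hA1c, hA1m⟩ := count_seq (Finset.Icc 1 n) ⌊E1⌋₊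
  rw [Nat.card_Icc, Nat.add_sub_cancel] at hA1c
  choose A2 hA2c hA2m using fun Λ => count_two Λ ⌊E2⌋₊
  choose A3 hA3c hA3m using fun Λ => count_mult Λ n
  set G2 : ℕ → Multiset ℕ → Finset (Multiset ℕ) := fun d T => A3 (Cont μ2 n d T)
  set G1 : ℕ → Multiset ℕ → Finset (Multiset ℕ) := fun d T => Fam2 n (A2 (Cont μ1 n d T)) Part G2
  have hG2 : ∀ d, 1 ≤ d → ∀ T, (G2 d T).card ≤ (n + 1) ^ ⌊34560 * μ2⌋₊ := by
    intro d _ T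
    refine (hA3c _).trans (Nat.pow_le_pow_right (by omega) ?_)
    exact Nat.le_floor (Cont_card μ2 hμ2 n d T)
  have hG1 : ∀ d, 1 ≤ d → ∀ T, (G1 d T).card ≤ n * (2 ^ (⌊34560 * μ1⌋₊ + ⌊E2⌋₊) *
      (2 ^ (⌊34560 * μ1⌋₊ + ⌊E2⌋₊) * ((2 * n + 1) ^ (3 * Nat.sqrt n + 1)
          + (n + 1) ^ ⌊34560 * μ2⌋₊))) := by
    intro d _ T
    refine (Fam2_card n _ Part G2 _ hG2).trans ?_
    have h1 : (A2 (Cont μ1 n d T)).card ≤ 2 ^ (⌊34560 * μ1⌋₊ + ⌊E2⌋₊) := by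
      refine (hA2c _).trans (Nat.pow_le_pow_right (by omega) ?_)
      exact Nat.add_le_add_right (Nat.le_floor (Cont_card μ1 hμ1 n d T)) _
    gcongr
  refine ⟨Fam2 n A1 Part G1, ?_, ?_⟩
  · refine (Fam2_card n A1 Part G1 _ hG1).trans ?_
    gcongr
  · intro P Q hat
    obtain ⟨X, Y, T, d, hP, hTX, hd1, hdn, hXc, hcase⟩ := lemmaP hn μ1 E1 hμ1 hE1 hs1 hat P le_rfl
    have hmem : ∀ S ≤ P, ∀ x ∈ S, 1 ≤ x ∧ x ≤ n := fun S hS x hx => hat.1 x (Multiset.mem_of_le hS hx)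
    have hXP : X ≤ P := by rw [hP]; exact Multiset.le_add_right _ _
    have hYP : Y ≤ P := by rw [hP]; exact Multiset.le_add_left _ _
    have hXA : X ∈ A1 := hA1m X (fun x hx => Finset.mem_Icc.2 (hmem X hXP x hx)) (Nat.le_floor hXc)
    have hTA : T ∈ A1 := hA1m T (fun x hx => Finset.mem_Icc.2 (hmem T (hTX.trans hXP) x hx))
      ((Multiset.card_le_card hTX).trans (Nat.le_floor hXc))
    rw [hP]
    refine Fam2_mem n A1 Part G1 hPm X Y T d hd1 hdn hXA hTA (fun y hy => (hmem Y hYP y hy).1) ?_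
    rcases hcase with h | h
    · exact Or.inl h
    right
    obtain ⟨X2, Y2, T2, d2, hY, hTX2, hd1', hdn', hXc2, hcase2⟩ := lemmaP hn μ2 E2 hμ2 hE2 hs2 hat Y hYP
    have hXY : X2 ≤ Y := by rw [hY]; exact Multiset.le_add_right _ _
    have hYY : Y2 ≤ Y := by rw [hY]; exact Multiset.le_add_left _ _
    have hX2A : X2 ∈ A2 (Cont μ1 n d T) :=
      hA2m _ X2 (fun x hx => h x (Multiset.mem_of_le hXY hx)) (Nat.le_floor hXc2)
    have hT2A : T2 ∈ A2 (Cont μ1 n d T) :=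
      hA2m _ T2 (fun x hx => h x (Multiset.mem_of_le (hTX2.trans hXY) hx))
        ((Multiset.card_le_card hTX2).trans (Nat.le_floor hXc2))
    rw [hY]
    refine Fam2_mem n _ Part G2 hPm X2 Y2 T2 d2 hd1' hdn' hX2A hT2A
      (fun y hy => (hmem Y2 (hYY.trans hYP) y hy).1) ?_
    rcases hcase2 with h2 | h2
    · exact Or.inl h2
    right
    exact hA3m _ Y2 h2 (fun x => (Multiset.count_le_of_le x (hYY.trans hYP)).trans (atom_mult hat hn x))

end

end TorusComb


namespace TorusComb

noncomputable section

lemma size_cond (n : ℕ) (hn : 1 ≤ n) (η : ℝ) (hη : 0 < η) (hK : η ≤ 34560 * 192)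
    (hlog : 23041 * Real.log (2 * n + 2) ≤ η / 16 * Real.sqrt (Real.sqrt n)) :
    ∀ d : ℕ, 1 ≤ d → d ≤ n → 34560 * (192 / η * Real.sqrt n) < ((n / d : ℕ) : ℝ) →
      23041 * Real.log (2 * (n / d : ℕ) + 2) + 3 * (2 * (n / d : ℕ) + 2) / (192 / η * Real.sqrt n)
        ≤ (η * Real.sqrt n) / (8 * Real.sqrt d) := by
  intro d hd1 hdn hN
  have hnR : (1:ℝ) ≤ n := by exact_mod_cast hn
  have hdR : (1:ℝ) ≤ d := by exact_mod_cast hd1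
  set a := Real.sqrt (Real.sqrt n) with ha
  set e := Real.sqrt d with he
  have hs1 : 1 ≤ Real.sqrt n := Real.one_le_sqrt.2 hnR
  have ha1 : 1 ≤ a := Real.one_le_sqrt.2 hs1
  have he1 : 1 ≤ e := Real.one_le_sqrt.2 hdR
  have haa : Real.sqrt n = a ^ 2 := (Real.sq_sqrt (by positivity)).symm
  have hna : (n:ℝ) = a ^ 4 := by
    have : (n:ℝ) = Real.sqrt n ^ 2 := (Real.sq_sqrt (by positivity)).symm
    rw [haa] at this; rw [this]; ring
  have hde : (d:ℝ) = e ^ 2 := (Real.sq_sqrt (by positivity)).symm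
  have hNd : ((n / d : ℕ) : ℝ) * d ≤ n := by exact_mod_cast Nat.div_mul_le_self n d
  have hNn : ((n / d : ℕ) : ℝ) ≤ n := by exact_mod_cast Nat.div_le_self n d
  have hN1 : (1:ℝ) ≤ ((n / d : ℕ) : ℝ) := by exact_mod_cast Nat.div_pos hdn (by omega)
  set N : ℝ := ((n / d : ℕ) : ℝ) with hNdef
  rw [haa] at hN ⊢
  rw [hde, hna] at hNd
  have hKa : a ^ 2 ≤ 34560 * (192 / η * a ^ 2) := by
    have : 1 ≤ 34560 * (192 / η) := by
      rw [← mul_div_assoc, one_le_div hη]; exact hK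
    nlinarith [sq_nonneg a]
  have hea : e ≤ a := by
    by_contra hc
    push Not at hc
    have h1 : a ^ 2 < N := lt_of_le_of_lt hKa hN
    have h2 : a ^ 2 < e ^ 2 := by nlinarith
    have h3 : a ^ 2 * a ^ 2 < N * e ^ 2 := by nlinarith [sq_nonneg a]
    nlinarith
  have e0 : 0 < e := by linarith
  have a0 : 0 < a := by linarith
  have p1 : 23041 * Real.log (2 * N + 2) ≤ η * a ^ 2 / (16 * e) := by
    have h1 : Real.log (2 * N + 2) ≤ Real.log (2 * n + 2) :=
      Real.log_le_log (by linarith) (by linarith)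
    have h2 : η / 16 * a ≤ η * a ^ 2 / (16 * e) := by
      rw [le_div_iff₀ (by positivity)]
      have : a * e ≤ a * a := by gcongr
      nlinarith
    linarith
  have p2 : 3 * (2 * N + 2) / (192 / η * a ^ 2) ≤ η * a ^ 2 / (16 * e) := by
    have h1 : 3 * (2 * N + 2) / (192 / η * a ^ 2) ≤ 12 * N / (192 / η * a ^ 2) := by
      exact div_le_div_of_nonneg_right (by linarith) (by positivity)
    refine h1.trans ?_
    have h2 : 12 * N / (192 / η * a ^ 2) = η * N / (16 * a ^ 2) := by field_simp; ring
    rw [h2, div_le_div_iff₀ (by positivity) (by positivity)]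
    have h3 : N * e ≤ a ^ 4 := by
      have : N * e ≤ N * e ^ 2 := by gcongr; nlinarith
      linarith
    have h4 : η * (N * e) ≤ η * a ^ 4 := by gcongr
    nlinarith
  have p3 : η * a ^ 2 / (8 * e) = η * a ^ 2 / (16 * e) + η * a ^ 2 / (16 * e) := by field_simp; ring
  rw [p3]
  linarith

lemma nat_pow_le_exp (b k : ℕ) (β κ : ℝ) (hb : 1 ≤ b) (hβ : Real.log b ≤ β) (hκ : (k : ℝ) ≤ κ) :
    (((b ^ k : ℕ)) : ℝ) ≤ Real.exp (κ * β) := by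
  have hb0 : (0:ℝ) < b := by exact_mod_cast hb
  have hl : 0 ≤ Real.log b := Real.log_nonneg (by exact_mod_cast hb)
  push_cast
  rw [← Real.exp_log (pow_pos hb0 k), Real.log_pow]
  apply Real.exp_le_exp.2
  have hk : (0:ℝ) ≤ k := by positivity
  nlinarith

lemma comb_at (n : ℕ) (hn : 1 ≤ n)
    (hlog : 23041 * Real.log (2 * n + 2) ≤ (1/2) / 16 * Real.sqrt (Real.sqrt n))
    (hl : 40000000 ≤ Real.log (2 * n)) (hr : 4 ≤ Real.sqrt n) :
    ∃ F : Finset (Multiset ℕ), (F.card : ℝ) ≤ Real.exp (6 * Real.sqrt n * Real.log (2 * n)) ∧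
      ∀ P Q : Multiset ℕ, Atom n P Q → P ∈ F := by
  have hnR : (1:ℝ) ≤ n := by exact_mod_cast hn
  set r := Real.sqrt n with hrdef
  set ℓ := Real.log (2 * n) with hℓ
  obtain ⟨F, hF, hm⟩ := family hn (192 / (1/2) * r) ((1/2) * r) (192 / 6635520 * r) (6635520 * r)
    (by positivity) (by positivity) (by positivity) (by positivity)
    (size_cond n hn (1/2) (by norm_num) (by norm_num) hlog)
    (size_cond n hn 6635520 (by norm_num) (by norm_num) (by
      refine hlog.trans ?_
      have : 0 ≤ Real.sqrt (Real.sqrt n) := Real.sqrt_nonneg _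
      nlinarith))
  refine ⟨F, ?_, hm⟩
  set A : ℕ := (n + 1) ^ ⌊(1/2) * r⌋₊ with hA
  set Pt : ℕ := (2 * n + 1) ^ (3 * Nat.sqrt n + 1) with hPt
  set Bq : ℕ := 2 ^ (⌊34560 * (192 / (1/2) * r)⌋₊ + ⌊6635520 * r⌋₊) with hBq
  set D : ℕ := (n + 1) ^ ⌊34560 * (192 / 6635520 * r)⌋₊ with hD
  have hF' : (F.card : ℝ) ≤ n * (A * (A * (Pt + n * (Bq * (Bq * (Pt + D)))))) := by exact_mod_cast hF
  have l1 : Real.log ((n + 1 : ℕ) : ℝ) ≤ ℓ := by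
    apply Real.log_le_log (by positivity)
    push_cast; linarith
  have l2 : Real.log ((2 * n + 1 : ℕ) : ℝ) ≤ ℓ + 1 := by
    have h1 : Real.log ((2 * n + 1 : ℕ) : ℝ) ≤ Real.log (2 * n * Real.exp 1) := by
      apply Real.log_le_log (by positivity)
      push_cast
      have := Real.add_one_le_exp (1:ℝ)
      nlinarith
    rwa [Real.log_mul (by positivity) (Real.exp_pos 1).ne', Real.log_exp] at h1
  have l3 : Real.log ((2 : ℕ) : ℝ) ≤ 1 := by
    push_cast; linarith [Real.log_two_lt_d9]
  have hA' : (A : ℝ) ≤ Real.exp ((1/2) * r * ℓ) :=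
    nat_pow_le_exp _ _ _ _ (by omega) l1 (Nat.floor_le (by positivity))
  have hsq : (Nat.sqrt n : ℝ) ≤ r := Real.nat_sqrt_le_real_sqrt
  have hPt' : (Pt : ℝ) ≤ Real.exp ((3 * r + 1) * (ℓ + 1)) :=
    nat_pow_le_exp _ _ _ _ (by omega) l2 (by push_cast; linarith)
  have hB' : (Bq : ℝ) ≤ Real.exp (19906560 * r * 1) := by
    refine nat_pow_le_exp _ _ _ _ (by omega) l3 ?_
    have h1 := Nat.floor_le (a := 34560 * (192 / (1/2) * r)) (by positivity)
    have h2 := Nat.floor_le (a := 6635520 * r) (by positivity)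
    push_cast
    linarith
  have hD' : (D : ℝ) ≤ Real.exp (r * ℓ) := by
    refine nat_pow_le_exp _ _ _ _ (by omega) l1 ?_
    have h1 := Nat.floor_le (a := 34560 * (192 / 6635520 * r)) (by positivity)
    linarith
  have hD'' : (D : ℝ) ≤ Real.exp ((3 * r + 1) * (ℓ + 1)) := by
    refine hD'.trans (Real.exp_le_exp.2 ?_)
    nlinarith
  have hn' : (n : ℝ) ≤ Real.exp ℓ := by
    rw [hℓ, Real.exp_log (by positivity)]; linarith
  set eP := Real.exp ((3 * r + 1) * (ℓ + 1))
  set eB := Real.exp (19906560 * r * 1)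
  set eA := Real.exp ((1/2) * r * ℓ)
  set eN := Real.exp ℓ
  have hB1 : 1 ≤ eB := Real.one_le_exp (by positivity)
  have hN1 : 1 ≤ eN := Real.one_le_exp (by linarith)
  have hP0 : 0 < eP := Real.exp_pos _
  have hinner : (Pt : ℝ) + n * (Bq * (Bq * (Pt + D))) ≤ 3 * (eN * (eB * (eB * eP))) := by
    have h1 : (n : ℝ) * (Bq * (Bq * (Pt + D))) ≤ eN * (eB * (eB * (eP + eP))) := by
      gcongr
    have h2 : 1 ≤ eN * (eB * eB) := one_le_mul_of_one_le_of_one_le hN1 (one_le_mul_of_one_le_of_one_le hB1 hB1)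
    have h3 : eP ≤ eN * (eB * eB) * eP := le_mul_of_one_le_left hP0.le h2
    have h4 : eN * (eB * (eB * (eP + eP))) = 2 * (eN * (eB * eB) * eP) := by ring
    have h5 : eN * (eB * (eB * eP)) = eN * (eB * eB) * eP := by ring
    rw [h5]; rw [h4] at h1
    linarith
  have htot : (F.card : ℝ) ≤ eN * (eA * (eA * (3 * (eN * (eB * (eB * eP)))))) := by
    refine hF'.trans ?_
    gcongr
  have h3 : (3:ℝ) ≤ Real.exp 2 := by linarith [Real.add_one_le_exp (2:ℝ)]
  have htot2 : (F.card : ℝ) ≤ eN * (eA * (eA * (Real.exp 2 * (eN * (eB * (eB * eP)))))) := by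
    refine htot.trans ?_
    gcongr
  refine htot2.trans ?_
  simp only [eN, eA, eB, eP, ← Real.exp_add]
  apply Real.exp_le_exp.2
  nlinarith

lemma comb : ∃ n0 : ℕ, ∀ n ≥ n0, ∃ F : Finset (Multiset ℕ),
    (F.card : ℝ) ≤ Real.exp (6 * Real.sqrt n * Real.log (2 * n)) ∧
      ∀ P Q : Multiset ℕ, Atom n P Q → P ∈ F := by
  have hcast : Filter.Tendsto (fun n : ℕ => (n : ℝ)) Filter.atTop Filter.atTop := tendsto_natCast_atTop_atTop
  have t1 : Filter.Tendsto (fun n : ℕ => Real.log (2 * n)) Filter.atTop Filter.atTop :=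
    Real.tendsto_log_atTop.comp (hcast.const_mul_atTop (by norm_num : (0:ℝ) < 2))
  have t2 : Filter.Tendsto (fun n : ℕ => Real.sqrt n) Filter.atTop Filter.atTop :=
    Real.tendsto_sqrt_atTop.comp hcast
  have t3 : Filter.Tendsto (fun n : ℕ => 2 * (n : ℝ) + 2) Filter.atTop Filter.atTop :=
    Filter.tendsto_atTop_add_const_right _ _ (hcast.const_mul_atTop (by norm_num : (0:ℝ) < 2))
  have t4 := t3.eventually ((isLittleO_log_rpow_atTop (r := 1/4) (by norm_num)).bound
    (show (0:ℝ) < 1 / (64 * 23041) by norm_num))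
  have ev := (((Filter.eventually_ge_atTop 1).and t4).and (t1.eventually_ge_atTop 40000000)).and
    (t2.eventually_ge_atTop 4)
  obtain ⟨n0, h0⟩ := Filter.eventually_atTop.1 ev
  refine ⟨n0, fun n hn => ?_⟩
  obtain ⟨⟨⟨h1, h2⟩, h3⟩, h4⟩ := h0 n hn
  refine comb_at n h1 ?_ h3 h4
  have hnR : (1:ℝ) ≤ n := by exact_mod_cast h1
  have h5 : (2 * (n:ℝ) + 2) ^ (1/4 : ℝ) ≤ 2 * Real.sqrt (Real.sqrt n) := by
    have e1 : (2 * (n:ℝ) + 2) ^ (1/4 : ℝ) = Real.sqrt (Real.sqrt (2 * n + 2)) := by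
      rw [Real.sqrt_eq_rpow, Real.sqrt_eq_rpow, ← Real.rpow_mul (by positivity)]; norm_num
    rw [e1]
    have e2 : 2 * Real.sqrt (Real.sqrt n) = Real.sqrt (Real.sqrt (16 * n)) := by
      rw [show (16:ℝ) * n = 4 ^ 2 * n by norm_num, Real.sqrt_mul (by norm_num), Real.sqrt_sq (by norm_num),
        show (4:ℝ) * Real.sqrt n = 2 ^ 2 * Real.sqrt n by norm_num, Real.sqrt_mul (by norm_num),
        Real.sqrt_sq (by norm_num)]
    rw [e2]
    apply Real.sqrt_le_sqrt
    apply Real.sqrt_le_sqrt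
    linarith
  rw [Real.norm_eq_abs, Real.norm_eq_abs, abs_of_nonneg (Real.log_nonneg (by linarith)),
    abs_of_nonneg (by positivity)] at h2
  have h6 : 0 ≤ (2 * (n:ℝ) + 2) ^ (1/4 : ℝ) := by positivity
  nlinarith

end

end TorusComb

section TorusAlg

open TorusComb

variable {k}

lemma torusAct_monomial {ι : Type} (w : ι → ℤ) (t : kˣ) (m : ι →₀ ℕ) :
    torusAct k w t (monomial m 1) = ((t ^ (Finsupp.weight w m) : kˣ) : k) • monomial m (1 : k) := by
  induction m using Finsupp.induction_linear with
  | zero => simp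
  | add a b ha hb =>
    have h1 : (monomial (a + b) (1 : k)) = monomial a 1 * monomial b 1 := by
      rw [monomial_mul, one_mul]
    rw [h1, map_mul, ha, hb, map_add, zpow_add, Units.val_mul, smul_mul_smul_comm]
  | single i e =>
    have h1 : (monomial (Finsupp.single i e) (1 : k)) = X i ^ e := (X_pow_eq_monomial).symm
    rw [h1, map_pow]
    unfold torusAct
    rw [aeval_X, smul_pow, Finsupp.weight_single, ← Units.val_pow_eq_pow_val, ← zpow_natCast, ← zpow_mul]
    congr 3
    simp [mul_comm]

lemma coeff_torusAct {ι : Type} (w : ι → ℤ) (t : kˣ) (p : MvPolynomial ι k) (m : ι →₀ ℕ) :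
    coeff m (torusAct k w t p) = ((t ^ (Finsupp.weight w m) : kˣ) : k) * coeff m p := by
  classical
  induction p using MvPolynomial.induction_on' with
  | monomial u a =>
    have h1 : monomial u a = a • monomial u (1 : k) := by
      rw [smul_monomial, smul_eq_mul, mul_one]
    rw [h1, map_smul, torusAct_monomial]
    simp only [coeff_smul, coeff_monomial, smul_eq_mul]
    split_ifs with h
    · rw [h]; ring
    · simp
  | add p q hp hq => rw [map_add, coeff_add, hp, hq, coeff_add]; ring

lemma exists_unit_zpow_ne_one [IsAlgClosed k] (w : ℤ) (hw : w ≠ 0) : ∃ t : kˣ, t ^ w ≠ 1 := by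
  classical
  have : Infinite k := IsAlgClosed.instInfinite
  obtain ⟨a, ha⟩ := Infinite.exists_notMem_finset ({0, 1} : Finset k)
  simp only [Finset.mem_insert, Finset.mem_singleton, not_or] at ha
  obtain ⟨z, hz⟩ := IsAlgClosed.exists_pow_nat_eq a (Int.natAbs_pos.2 hw)
  have hz0 : z ≠ 0 := by
    rintro rfl
    rw [zero_pow (Int.natAbs_pos.2 hw).ne'] at hz
    exact ha.1 hz.symm
  refine ⟨Units.mk0 z hz0, fun h => ?_⟩
  have h2 : (Units.mk0 z hz0) ^ w.natAbs = 1 := by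
    rcases Int.natAbs_eq w with h' | h'
    · rw [h', zpow_natCast] at h; exact h
    · rw [h', zpow_neg, inv_eq_one, zpow_natCast] at h; exact h
  have h3 := congrArg Units.val h2
  rw [Units.val_pow_eq_pow_val, Units.val_mk0, hz, Units.val_one] at h3
  exact ha.2 h3

lemma weight_zero_of_inv [IsAlgClosed k] {ι : Type} (w : ι → ℤ) (p : MvPolynomial ι k)
    (hp : p ∈ torusInv k w) (m : ι →₀ ℕ) (hm : coeff m p ≠ 0) : Finsupp.weight w m = 0 := by
  by_contra hne
  obtain ⟨t, ht⟩ := exists_unit_zpow_ne_one (k := k) _ hne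
  have h1 : torusAct k w t p = p := hp t
  have h2 := coeff_torusAct w t p m
  rw [h1] at h2
  apply ht
  apply Units.ext
  rw [Units.val_one]
  exact (mul_eq_right₀ hm).1 h2.symm

def posIdx (n a : ℕ) : Fin (2 * n + 1) := ⟨min (n + a) (2 * n), by omega⟩

def negIdx (n a : ℕ) : Fin (2 * n + 1) := ⟨n - a, by omega⟩

variable (k) in
noncomputable def monPQ (n : ℕ) (P Q : Multiset ℕ) : MvPolynomial (Fin (2 * n + 1)) k :=
  (P.map (fun a => X (posIdx n a))).prod * (Q.map (fun a => X (negIdx n a))).prod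

lemma monPQ_add (n : ℕ) (P Q P' Q' : Multiset ℕ) :
    monPQ k n (P + P') (Q + Q') = monPQ k n P Q * monPQ k n P' Q' := by
  unfold monPQ
  simp only [Multiset.map_add, Multiset.prod_add]
  ring

lemma torusAct_pos (n : ℕ) (t : kˣ) (P : Multiset ℕ) (hP : ∀ x ∈ P, 1 ≤ x ∧ x ≤ n) :
    torusAct k (wSym n) t ((P.map (fun a => X (posIdx n a))).prod) =
      ((t ^ (P.sum : ℤ) : kˣ) : k) • (P.map (fun a => X (posIdx n a))).prod := by
  induction P using Multiset.induction with
  | empty => simp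
  | cons a P ih =>
    have ha := hP a (Multiset.mem_cons_self a P)
    have h1 : wSym n (posIdx n a) = a := by simp [wSym, posIdx]; omega
    have h2 : torusAct k (wSym n) t (X (posIdx n a)) = ((t ^ (a : ℤ) : kˣ) : k) • X (posIdx n a) := by
      unfold torusAct; rw [aeval_X, h1]
    rw [Multiset.map_cons, Multiset.prod_cons, map_mul, h2,
      ih (fun x hx => hP x (Multiset.mem_cons_of_mem hx)), Multiset.sum_cons, Nat.cast_add, zpow_add,
      Units.val_mul, smul_mul_smul_comm]

lemma torusAct_neg (n : ℕ) (t : kˣ) (P : Multiset ℕ) (hP : ∀ x ∈ P, 1 ≤ x ∧ x ≤ n) :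
    torusAct k (wSym n) t ((P.map (fun a => X (negIdx n a))).prod) =
      ((t ^ (-(P.sum : ℤ)) : kˣ) : k) • (P.map (fun a => X (negIdx n a))).prod := by
  induction P using Multiset.induction with
  | empty => simp
  | cons a P ih =>
    have ha := hP a (Multiset.mem_cons_self a P)
    have h1 : wSym n (negIdx n a) = -(a : ℤ) := by simp [wSym, negIdx]; omega
    have h2 : torusAct k (wSym n) t (X (negIdx n a)) = ((t ^ (-(a : ℤ)) : kˣ) : k) • X (negIdx n a) := by
      unfold torusAct; rw [aeval_X, h1]
    rw [Multiset.map_cons, Multiset.prod_cons, map_mul, h2,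
      ih (fun x hx => hP x (Multiset.mem_cons_of_mem hx)), Multiset.sum_cons, Nat.cast_add, neg_add, zpow_add,
      Units.val_mul, smul_mul_smul_comm]

lemma monPQ_inv (n : ℕ) (P Q : Multiset ℕ) (hP : ∀ x ∈ P, 1 ≤ x ∧ x ≤ n)
    (hQ : ∀ x ∈ Q, 1 ≤ x ∧ x ≤ n) (hs : P.sum = Q.sum) : monPQ k n P Q ∈ torusInv k (wSym n) := by
  intro t
  unfold monPQ
  rw [map_mul, torusAct_pos n t P hP, torusAct_neg n t Q hQ, smul_mul_smul_comm, ← Units.val_mul,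
    ← zpow_add, hs, add_neg_cancel, zpow_zero, Units.val_one, one_smul]

lemma X_zero_inv (n : ℕ) : (X (posIdx n 0) : MvPolynomial (Fin (2 * n + 1)) k) ∈ torusInv k (wSym n) := by
  intro t
  have h1 : wSym n (posIdx n 0) = 0 := by simp [wSym, posIdx]; omega
  unfold torusAct
  rw [aeval_X, h1, zpow_zero, Units.val_one, one_smul]

lemma monPQ_mem (n : ℕ) (A : Subalgebra k (MvPolynomial (Fin (2 * n + 1)) k))
    (hA : ∀ P Q, Atom n P Q → monPQ k n P Q ∈ A) (c : ℕ) : ∀ P Q : Multiset ℕ, P.card + Q.card ≤ c →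
    (∀ x ∈ P, 1 ≤ x ∧ x ≤ n) → (∀ x ∈ Q, 1 ≤ x ∧ x ≤ n) → P.sum = Q.sum → monPQ k n P Q ∈ A := by
  induction c with
  | zero =>
    intro P Q hc _ _ _
    have h1 : P = 0 := Multiset.card_eq_zero.1 (by omega)
    have h2 : Q = 0 := Multiset.card_eq_zero.1 (by omega)
    subst h1; subst h2
    have : monPQ k n 0 0 = 1 := by simp [monPQ]
    rw [this]; exact A.one_mem
  | succ c ih =>
    intro P Q hc hP hQ hs
    by_cases hat : Atom n P Q
    · exact hA P Q hat
    · have : ∃ P' ≤ P, ∃ Q' ≤ Q, P'.sum = Q'.sum ∧ ¬ (P' = 0 ∧ Q' = 0) ∧ ¬ (P' = P ∧ Q' = Q) := by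
        by_contra hcon
        apply hat
        refine ⟨hP, hQ, hs, fun P' hP' Q' hQ' hs' => ?_⟩
        by_contra hor
        rw [not_or] at hor
        exact hcon ⟨P', hP', Q', hQ', hs', hor.1, hor.2⟩
      obtain ⟨P', hP', Q', hQ', hs', hne0, hne1⟩ := this
      obtain ⟨P'', rfl⟩ := Multiset.le_iff_exists_add.1 hP'
      obtain ⟨Q'', rfl⟩ := Multiset.le_iff_exists_add.1 hQ'
      rw [monPQ_add]
      have hpos1 : 0 < P'.card + Q'.card := by
        by_contra h
        exact hne0 ⟨Multiset.card_eq_zero.1 (by omega), Multiset.card_eq_zero.1 (by omega)⟩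
      have hpos2 : 0 < P''.card + Q''.card := by
        by_contra h
        have h1 : P'' = 0 := Multiset.card_eq_zero.1 (by omega)
        have h2 : Q'' = 0 := Multiset.card_eq_zero.1 (by omega)
        exact hne1 ⟨by rw [h1, add_zero], by rw [h2, add_zero]⟩
      simp only [Multiset.card_add, Multiset.sum_add] at hc hs
      refine A.mul_mem (ih P' Q' (by omega) ?_ ?_ hs') (ih P'' Q'' (by omega) ?_ ?_ (by omega))
      · exact fun x hx => hP x (Multiset.mem_add.2 (Or.inl hx))
      · exact fun x hx => hQ x (Multiset.mem_add.2 (Or.inl hx))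
      · exact fun x hx => hP x (Multiset.mem_add.2 (Or.inr hx))
      · exact fun x hx => hQ x (Multiset.mem_add.2 (Or.inr hx))

lemma monomial_decomp (n : ℕ) (m : Fin (2 * n + 1) →₀ ℕ) : ∃ (j : ℕ) (P Q : Multiset ℕ),
    (∀ x ∈ P, 1 ≤ x ∧ x ≤ n) ∧ (∀ x ∈ Q, 1 ≤ x ∧ x ≤ n) ∧
    monomial m (1 : k) = X (posIdx n 0) ^ j * monPQ k n P Q ∧
    Finsupp.weight (wSym n) m = (P.sum : ℤ) - Q.sum := by
  induction m using Finsupp.induction_linear with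
  | zero => exact ⟨0, 0, 0, by simp, by simp, by simp [monPQ], by simp⟩
  | add a b ha hb =>
    obtain ⟨j, P, Q, h1, h2, h3, h4⟩ := ha
    obtain ⟨j', P', Q', h1', h2', h3', h4'⟩ := hb
    refine ⟨j + j', P + P', Q + Q', ?_, ?_, ?_, ?_⟩
    · intro x hx
      rcases Multiset.mem_add.1 hx with h | h
      · exact h1 x h
      · exact h1' x h
    · intro x hx
      rcases Multiset.mem_add.1 hx with h | h
      · exact h2 x h
      · exact h2' x h
    · have e : (monomial (a + b) (1 : k)) = monomial a 1 * monomial b 1 := by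
        rw [monomial_mul, one_mul]
      rw [e, h3, h3', monPQ_add]; ring
    · rw [map_add, h4, h4', Multiset.sum_add, Multiset.sum_add]; push_cast; ring
  | single i e =>
    have h1 : (monomial (Finsupp.single i e) (1 : k)) = X i ^ e := (X_pow_eq_monomial).symm
    have hi := i.2
    have hw : Finsupp.weight (wSym n) (Finsupp.single i e) = e * ((i : ℤ) - n) := by
      rw [Finsupp.weight_single]; simp [wSym]
    rw [h1, hw]
    rcases lt_trichotomy (i : ℕ) n with h | h | h
    · have hidx : negIdx n (n - i) = i := by
        apply Fin.ext; simp only [negIdx]; omega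
      refine ⟨0, 0, Multiset.replicate e (n - i), by simp, ?_, ?_, ?_⟩
      · intro x hx
        rw [Multiset.eq_of_mem_replicate hx]; omega
      · simp [monPQ, hidx]
      · rw [Multiset.sum_replicate]
        simp only [Multiset.sum_zero, smul_eq_mul, Nat.cast_mul, Nat.cast_zero]
        rw [Nat.cast_sub h.le]; ring
    · have hidx : posIdx n 0 = i := by
        apply Fin.ext; simp only [posIdx]; omega
      refine ⟨e, 0, 0, by simp, by simp, by simp [monPQ, hidx], ?_⟩
      rw [h]; simp
    · have hidx : posIdx n (i - n) = i := by
        apply Fin.ext; simp only [posIdx]; omega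
      refine ⟨0, Multiset.replicate e (i - n), 0, ?_, by simp, ?_, ?_⟩
      · intro x hx
        rw [Multiset.eq_of_mem_replicate hx]; omega
      · simp [monPQ, hidx]
      · rw [Multiset.sum_replicate]
        simp only [Multiset.sum_zero, smul_eq_mul, Nat.cast_mul, Nat.cast_zero]
        rw [Nat.cast_sub h.le]; ring

lemma minGens_le [IsAlgClosed k] (n : ℕ) (F : Finset (Multiset ℕ))
    (hF : ∀ P Q : Multiset ℕ, Atom n P Q → P ∈ F) :
    minGens k (torusInv k (wSym n)) ≤ 1 + F.card * F.card := by
  classical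
  set G : Finset (MvPolynomial (Fin (2 * n + 1)) k) := insert (X (posIdx n 0))
    (((F ×ˢ F).filter (fun z => Atom n z.1 z.2)).image (fun z => monPQ k n z.1 z.2)) with hG
  have hcard : G.card ≤ 1 + F.card * F.card := by
    refine (Finset.card_insert_le _ _).trans ?_
    have h1 := Finset.card_image_le (s := (F ×ˢ F).filter (fun z => Atom n z.1 z.2))
      (f := fun z => monPQ k n z.1 z.2)
    have h2 := Finset.card_filter_le (F ×ˢ F) (fun z => Atom n z.1 z.2)
    rw [Finset.card_product] at h2
    omega
  refine le_trans (Nat.sInf_le ⟨G, rfl, ?_⟩) hcard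
  apply le_antisymm
  · apply Algebra.adjoin_le
    intro g hg
    rw [Finset.mem_coe, hG, Finset.mem_insert, Finset.mem_image] at hg
    rcases hg with rfl | ⟨z, hz, rfl⟩
    · exact X_zero_inv n
    · have hat := (Finset.mem_filter.1 hz).2
      exact monPQ_inv n _ _ hat.1 hat.2.1 hat.2.2.1
  · intro p hp
    have hatom : ∀ P Q, Atom n P Q → monPQ k n P Q ∈ Algebra.adjoin k (G : Set _) := by
      intro P Q hat
      apply Algebra.subset_adjoin
      rw [Finset.mem_coe, hG, Finset.mem_insert, Finset.mem_image]
      right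
      exact ⟨(P, Q), Finset.mem_filter.2 ⟨Finset.mem_product.2 ⟨hF P Q hat, hF Q P hat.symm⟩, hat⟩, rfl⟩
    have hX0 : (X (posIdx n 0) : MvPolynomial (Fin (2 * n + 1)) k) ∈ Algebra.adjoin k (G : Set _) := by
      apply Algebra.subset_adjoin
      rw [Finset.mem_coe, hG]
      exact Finset.mem_insert_self _ _
    rw [p.as_sum]
    apply Subalgebra.sum_mem
    intro m hm
    have hw := weight_zero_of_inv (wSym n) p hp m (mem_support_iff.1 hm)
    obtain ⟨j, P, Q, h1, h2, h3, h4⟩ := monomial_decomp (k := k) n m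
    have hs : P.sum = Q.sum := by
      rw [hw] at h4; omega
    have e : monomial m (coeff m p) = coeff m p • monomial m (1 : k) := by
      rw [smul_monomial, smul_eq_mul, mul_one]
    rw [e, h3]
    apply Subalgebra.smul_mem
    exact Subalgebra.mul_mem _ (Subalgebra.pow_mem _ hX0 j) (monPQ_mem n _ hatom _ P Q le_rfl h1 h2 hs)

end TorusAlg

/-- Let `T = k*` act on `B = k[x_{-n}, …, x_0, …, x_n]` with `t · x_i = t^i x_i`.  Then
the cardinality of a minimal generating set of `B^T` is `O(n · e^{12√n · log(2n)})`. -/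
theorem symmetric_torus_invariants_minGens_bound [IsAlgClosed k] :
    ∃ C : ℝ, ∀ n : ℕ, 1 ≤ n →
      (minGens k (torusInv k (wSym n)) : ℝ) ≤
        C * n * Real.exp (12 * Real.sqrt n * Real.log (2 * n)) := by
  obtain ⟨n0, h0⟩ := TorusComb.comb
  refine ⟨2 + ∑ i ∈ Finset.range n0, (minGens k (torusInv k (wSym i)) : ℝ), fun n hn => ?_⟩
  have hnR : (1:ℝ) ≤ n := by exact_mod_cast hn
  have hlog : 0 ≤ Real.log (2 * n) := Real.log_nonneg (by linarith)
  have hexp : 1 ≤ Real.exp (12 * Real.sqrt n * Real.log (2 * n)) := Real.one_le_exp (by positivity)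
  have hS : 0 ≤ ∑ i ∈ Finset.range n0, (minGens k (torusInv k (wSym i)) : ℝ) :=
    Finset.sum_nonneg fun i _ => by positivity
  have hprod : Real.exp (12 * Real.sqrt n * Real.log (2 * n)) ≤
      n * Real.exp (12 * Real.sqrt n * Real.log (2 * n)) := le_mul_of_one_le_left (by linarith) hnR
  rw [mul_assoc]
  rcases Nat.lt_or_ge n n0 with h | h
  · have h1 : (minGens k (torusInv k (wSym n)) : ℝ) ≤
        ∑ i ∈ Finset.range n0, (minGens k (torusInv k (wSym i)) : ℝ) :=
      Finset.single_le_sum (f := fun i => (minGens k (torusInv k (wSym i)) : ℝ))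
        (fun i _ => by positivity) (Finset.mem_range.2 h)
    nlinarith
  · obtain ⟨F, hFc, hF⟩ := h0 n h
    have h1 : (minGens k (torusInv k (wSym n)) : ℝ) ≤ 1 + F.card * F.card := by
      exact_mod_cast minGens_le (k := k) n F hF
    have h2 : (F.card : ℝ) * F.card ≤ Real.exp (12 * Real.sqrt n * Real.log (2 * n)) := by
      have h3 : Real.exp (12 * Real.sqrt n * Real.log (2 * n)) =
          Real.exp (6 * Real.sqrt n * Real.log (2 * n)) * Real.exp (6 * Real.sqrt n * Real.log (2 * n)) := by
        rw [← Real.exp_add]; congr 1; ring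
      rw [h3]
      gcongr
    nlinarith
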